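/- arXiv:1711.09118 — 2 statements merged into one kernel-verified Lean document; each statement's English description precedes it below -/
import Mathlib

section
/- Let a ∈ ℝ and let h, u be real C² functions on the punctured unit disc B₁* such that Δh = 0 and Δu = ((∂h/∂x + a·y/|z|²)² + (∂h/∂y − a·x/|z|²)²)·e^{2u}. Assume the holomorphic function F(z) := ∂h/∂x − i·∂h/∂y has finite order N at 0, and set n := N if a = 0 and n := min(−1, N) if a ≠ 0. Assume there exist β < n+1 and a constant c such that u(z) + β·log|z| → c as z → 0. Let M_θ and M_r be the matrix components of the connection form ω_∇ determined by (h,u,a). Then lim_{z→0} M_θ(z) = (β/2)·[[0,−1],[1,0]], and there exists ε > 0 such that |z|^{−ε}·(|z|·M_r(z) − (β/2)·𝟙) → 0 as z → 0. -/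
open Complex Real Set Topology Filter Matrix

/-- Partial derivative in the `x`-direction of a function on `ℂ ≅ ℝ²`. -/
noncomputable def pdx (f : ℂ → ℝ) (z : ℂ) : ℝ := deriv (fun t : ℝ => f (z + t)) 0

/-- Partial derivative in the `y`-direction. -/
noncomputable def pdy (f : ℂ → ℝ) (z : ℂ) : ℝ := deriv (fun t : ℝ => f (z + t * Complex.I)) 0

/-- The flat Laplacian `Δ = ∂²/∂x² + ∂²/∂y²`. -/
noncomputable def lap (f : ℂ → ℝ) (z : ℂ) : ℝ := pdx (pdx f) z + pdy (pdy f) z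

/-- The punctured open unit disc `B₁* = {0 < |z| < 1}`. -/
def PDisc : Set ℂ := {z : ℂ | 0 < ‖z‖ ∧ ‖z‖ < 1}

/-- Radial derivative `∂f/∂r` expressed in Cartesian coordinates. -/
noncomputable def pdr (f : ℂ → ℝ) (z : ℂ) : ℝ :=
  (z.re * pdx f z + z.im * pdy f z) / ‖z‖

/-- Angular derivative `∂f/∂θ` expressed in Cartesian coordinates. -/
noncomputable def pdθ (f : ℂ → ℝ) (z : ℂ) : ℝ :=
  -z.im * pdx f z + z.re * pdy f z

/-- `ω₁₁(∂_r)` where `2ω₁₁ = e^u (dh − a dθ) − du`. -/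
noncomputable def ω11r (h u : ℂ → ℝ) (a : ℝ) (z : ℂ) : ℝ :=
  (Real.exp (u z) * pdr h z - pdr u z) / 2

/-- `ω₁₁(∂_θ)`. -/
noncomputable def ω11θ (h u : ℂ → ℝ) (a : ℝ) (z : ℂ) : ℝ :=
  (Real.exp (u z) * (pdθ h z - a) - pdθ u z) / 2

/-- `ω₂₂(∂_r)` where `2ω₂₂ = −e^u (dh − a dθ) − du`. -/
noncomputable def ω22r (h u : ℂ → ℝ) (a : ℝ) (z : ℂ) : ℝ :=
  -(Real.exp (u z) * pdr h z + pdr u z) / 2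

/-- `ω₂₂(∂_θ)`. -/
noncomputable def ω22θ (h u : ℂ → ℝ) (a : ℝ) (z : ℂ) : ℝ :=
  -(Real.exp (u z) * (pdθ h z - a) + pdθ u z) / 2

/-- The `dθ`-component `M_θ` of the connection form `ω_∇ = M_r dr + M_θ dθ`. -/
noncomputable def Mθ (h u : ℂ → ℝ) (a : ℝ) (z : ℂ) : Matrix (Fin 2) (Fin 2) ℝ :=
  !![ω11θ h u a z, -‖z‖ * ω11r h u a z;
     ‖z‖ * ω22r h u a z, ω22θ h u a z]

/-- The `dr`-component `M_r` of the connection form. -/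
noncomputable def Mr (h u : ℂ → ℝ) (a : ℝ) (z : ℂ) : Matrix (Fin 2) (Fin 2) ℝ :=
  !![ω11r h u a z, ω11θ h u a z / ‖z‖;
     -ω22θ h u a z / ‖z‖, ω22r h u a z]


namespace S12

open InnerProductSpace Laplacian

lemma lap_eq_fderiv (f : ℂ → ℝ) (z : ℂ) :
    (Δ f) z = fderiv ℝ (fderiv ℝ f) z 1 1 + fderiv ℝ (fderiv ℝ f) z I I := by
  rw [laplacian_eq_iteratedFDeriv_complexPlane]
  simp [iteratedFDeriv_two_apply]

lemma lap_comp_isom (T : ℂ ≃ₗᵢ[ℝ] ℂ) (p : ℂ) (f : ℂ → ℝ) (ζ : ℂ) :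
    (Δ (fun x => f (p + T x))) ζ = (Δ f) (p + T ζ) := by
  have h1 : ∀ v : Fin 2 → ℂ, iteratedFDeriv ℝ 2 (fun x => f (p + T x)) ζ v =
      iteratedFDeriv ℝ 2 f (p + T ζ) (fun i => T (v i)) := by
    intro v
    have := ContinuousLinearEquiv.iteratedFDerivWithin_comp_right
      (T.toContinuousLinearEquiv) (fun x => f (p + x)) (s := Set.univ) uniqueDiffOn_univ
      (x := ζ) (Set.mem_univ _) 2
    simp only [Set.preimage_univ, iteratedFDerivWithin_univ] at this
    have h2 : (fun x => f (p + T x)) = (fun x => f (p + x)) ∘ T.toContinuousLinearEquiv := by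
      ext x; simp
    rw [h2, this, iteratedFDeriv_comp_add_left]
    simp
  rw [laplacian_eq_iteratedFDeriv_orthonormalBasis _ Complex.orthonormalBasisOneI,
    laplacian_eq_iteratedFDeriv_orthonormalBasis _ (Complex.orthonormalBasisOneI.map T)]
  simp only [h1]
  refine Finset.sum_congr rfl fun i _ => ?_
  congr 1
  ext j
  fin_cases j <;> simp

lemma hasDerivAt_line {f : ℂ → ℝ} {z : ℂ} (hf : DifferentiableAt ℝ f z) (e : ℂ) :
    HasDerivAt (fun t : ℝ => f (z + t * e)) (fderiv ℝ f z e) 0 := by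
  have h1 : HasDerivAt (fun t : ℝ => z + t * e) e 0 := by
    have := ((Complex.ofRealCLM.hasDerivAt (x := (0:ℝ))).mul_const e).const_add z
    simpa using this
  have h2 : HasFDerivAt f (fderiv ℝ f z) (z + (0:ℝ) * e) := by simpa using hf.hasFDerivAt
  exact h2.comp_hasDerivAt (0:ℝ) h1

lemma pdx_eq {f : ℂ → ℝ} {z : ℂ} (hf : DifferentiableAt ℝ f z) : pdx f z = fderiv ℝ f z 1 := by
  have := (hasDerivAt_line hf 1).deriv
  simpa [pdx] using this

lemma pdy_eq {f : ℂ → ℝ} {z : ℂ} (hf : DifferentiableAt ℝ f z) : pdy f z = fderiv ℝ f z I := by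
  exact (hasDerivAt_line hf I).deriv

lemma ev_diff {f : ℂ → ℝ} {z : ℂ} (hf : ContDiffAt ℝ 2 f z) :
    ∀ᶠ w in 𝓝 z, DifferentiableAt ℝ f w := by
  filter_upwards [hf.eventually (by simp)] with w hw
  exact hw.differentiableAt (by simp)

lemma diff_fderiv {f : ℂ → ℝ} {z : ℂ} (hf : ContDiffAt ℝ 2 f z) :
    DifferentiableAt ℝ (fderiv ℝ f) z :=
  (hf.fderiv_right (m := 1) (by norm_num)).differentiableAt (by simp)

lemma diff_fderiv_apply {f : ℂ → ℝ} {z : ℂ} (hf : ContDiffAt ℝ 2 f z) (e : ℂ) :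
    HasFDerivAt (fun w => fderiv ℝ f w e) ((fderiv ℝ (fderiv ℝ f) z).flip e) z := by
  have := (diff_fderiv hf).hasFDerivAt.clm_apply (hasFDerivAt_const e z)
  simpa using this

lemma pdx_congr {f g : ℂ → ℝ} {z : ℂ} (h : f =ᶠ[𝓝 z] g) : pdx f z = pdx g z := by
  have hc : Tendsto (fun t : ℝ => z + t) (𝓝 0) (𝓝 z) := by
    have : Continuous (fun t : ℝ => z + t) := by fun_prop
    simpa using this.tendsto 0
  exact Filter.EventuallyEq.deriv_eq (hc.eventually h)

lemma pdy_congr {f g : ℂ → ℝ} {z : ℂ} (h : f =ᶠ[𝓝 z] g) : pdy f z = pdy g z := by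
  have hc : Tendsto (fun t : ℝ => z + t * I) (𝓝 0) (𝓝 z) := by
    have : Continuous (fun t : ℝ => z + t * I) := by fun_prop
    simpa using this.tendsto 0
  exact Filter.EventuallyEq.deriv_eq (hc.eventually h)

lemma lap_eq {f : ℂ → ℝ} {z : ℂ} (hf : ContDiffAt ℝ 2 f z) : lap f z = (Δ f) z := by
  rw [lap_eq_fderiv, lap]
  congr 1
  · rw [pdx_congr (g := fun w => fderiv ℝ f w 1), pdx_eq (diff_fderiv_apply hf 1).differentiableAt,
      (diff_fderiv_apply hf 1).fderiv]
    · rfl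
    · filter_upwards [ev_diff hf] with w hw using pdx_eq hw
  · rw [pdy_congr (g := fun w => fderiv ℝ f w I), pdy_eq (diff_fderiv_apply hf I).differentiableAt,
      (diff_fderiv_apply hf I).fderiv]
    · rfl
    · filter_upwards [ev_diff hf] with w hw using pdy_eq hw

/-- second derivative along a line at a local max -/
lemma d2_nonpos {f : ℂ → ℝ} {z : ℂ} (hf : ContDiffAt ℝ 2 f z) (hm : IsLocalMax f z) (e : ℂ) :
    fderiv ℝ (fderiv ℝ f) z e e ≤ 0 := by
  by_contra! hcon
  set g : ℝ → ℝ := fun t => f (z + t * e) with hg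
  have hcont : Continuous (fun t : ℝ => z + t * e) := by fun_prop
  have hc : Tendsto (fun t : ℝ => z + t * e) (𝓝 0) (𝓝 z) := by
    simpa using hcont.tendsto 0
  have hd1 : ∀ᶠ t in 𝓝 (0:ℝ), deriv g t = fderiv ℝ f (z + t * e) e := by
    filter_upwards [hc.eventually (ev_diff hf)] with t ht
    have h1 := hasDerivAt_line ht e
    have h2 : HasDerivAt (fun s : ℝ => g (t + s)) (fderiv ℝ f (z + t * e) e) 0 := by
      convert h1 using 2 with s
      simp [hg]; ring_nf
    have h3 := h2.deriv
    rw [deriv_comp_const_add] at h3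
    simpa using h3
  have hd2 : deriv (deriv g) 0 = fderiv ℝ (fderiv ℝ f) z e e := by
    rw [Filter.EventuallyEq.deriv_eq hd1]
    rw [(hasDerivAt_line (diff_fderiv_apply hf e).differentiableAt e).deriv,
      (diff_fderiv_apply hf e).fderiv]
    rfl
  have hmg : IsLocalMax g 0 := by
    have := hc.eventually hm
    filter_upwards [this] with t ht
    simpa [hg] using ht
  have hg0 : deriv g 0 = 0 := hmg.deriv_eq_zero
  have hgc : ContinuousAt g 0 := by
    have : ContinuousAt f (z + (0:ℝ) * e) := by simpa using hf.continuousAt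
    exact ContinuousAt.comp (f := fun t : ℝ => z + t * e) this hcont.continuousAt
  have hmin := isLocalMin_of_deriv_deriv_pos (by rw [hd2]; exact hcon) hg0 hgc
  have hconst : g =ᶠ[𝓝 0] fun _ => g 0 := by
    filter_upwards [hmg, hmin] with t h1 h2
    exact le_antisymm h1 h2
  have : deriv (deriv g) 0 = 0 := by
    rw [Filter.EventuallyEq.deriv_eq hconst.deriv]
    simp
  linarith

lemma lap_nonpos {f : ℂ → ℝ} {z : ℂ} (hf : ContDiffAt ℝ 2 f z) (hm : IsLocalMax f z) :
    (Δ f) z ≤ 0 := by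
  rw [lap_eq_fderiv]
  linarith [d2_nonpos hf hm 1, d2_nonpos hf hm I]

/-- maximum principle -/
lemma max_principle {K U : Set ℂ} (hK : IsCompact K) (hU : IsOpen U) (hUK : U ⊆ K) {f : ℂ → ℝ}
    (hc : ContinuousOn f K) (h2 : ∀ z ∈ U, ContDiffAt ℝ 2 f z) (hpos : ∀ z ∈ U, 0 < (Δ f) z)
    (hb : ∀ z ∈ K, z ∉ U → f z ≤ 0) : ∀ z ∈ K, f z ≤ 0 := by
  intro z hz
  obtain ⟨m, hm, hmax⟩ := hK.exists_isMaxOn ⟨z, hz⟩ hc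
  have hzm : f z ≤ f m := hmax hz
  by_cases hmU : m ∈ U
  · have : IsLocalMax f m := hmax.isLocalMax (mem_of_superset (hU.mem_nhds hmU) hUK)
    have := lap_nonpos (h2 m hmU) this
    linarith [hpos m hmU]
  · linarith [hb m hm hmU]

end S12

namespace S12

open InnerProductSpace Laplacian

lemma hda {f g : ℝ → ℝ} {a b x : ℝ} (h : HasDerivAt f a x) (hf : ∀ t, g t = f t) (ha : b = a) :
    HasDerivAt g b x := by
  obtain rfl : g = f := funext hf
  rwa [ha]

lemma pdx_of {f : ℂ → ℝ} {z : ℂ} {L : ℝ} (h : HasDerivAt (fun t : ℝ => f (z + t)) L 0) :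
    pdx f z = L := h.deriv

lemma pdy_of {f : ℂ → ℝ} {z : ℂ} {L : ℝ} (h : HasDerivAt (fun t : ℝ => f (z + t * I)) L 0) :
    pdy f z = L := h.deriv

lemma re_line (z : ℂ) : HasDerivAt (fun t : ℝ => z.re + t) 1 0 := by
  simpa using (hasDerivAt_id (0:ℝ)).const_add z.re

lemma im_line (z : ℂ) : HasDerivAt (fun t : ℝ => z.im + t) 1 0 := by
  simpa using (hasDerivAt_id (0:ℝ)).const_add z.im

lemma lap_im_rpow (s : ℝ) {z : ℂ} (hz : 0 < z.im) :
    ContDiffAt ℝ 2 (fun w : ℂ => w.im ^ s) z ∧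
    (Δ (fun w : ℂ => w.im ^ s)) z = s * (s - 1) * z.im ^ (s - 2) := by
  have hc : ContDiffAt ℝ 2 (fun w : ℂ => w.im ^ s) z :=
    (Complex.imCLM.contDiff.contDiffAt).rpow_const_of_ne hz.ne'
  refine ⟨hc, ?_⟩
  rw [← lap_eq hc, lap]
  have h1 : pdx (pdx (fun w : ℂ => w.im ^ s)) z = 0 := by
    simp [pdx]
  have h2 : ∀ r : ℝ, ∀ w : ℂ, 0 < w.im →
      pdy (fun w : ℂ => w.im ^ r) w = r * w.im ^ (r - 1) := by
    intro r w hw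
    apply pdy_of
    have := (im_line w).rpow_const (p := r) (Or.inl (by simpa using hw.ne'))
    simpa using this
  have h3 : pdy (pdy (fun w : ℂ => w.im ^ s)) z = s * (s - 1) * z.im ^ (s - 2) := by
    have hev : ∀ᶠ w : ℂ in 𝓝 z, 0 < w.im :=
      (isOpen_lt continuous_const Complex.continuous_im).mem_nhds hz
    rw [pdy_congr (g := fun w : ℂ => s * w.im ^ (s - 1))]
    · apply pdy_of
      have := ((im_line z).rpow_const (p := s - 1) (Or.inl (by simpa using hz.ne'))).const_mul s
      simp only [one_mul, add_zero] at this
      refine hda this (fun t => ?_) ?_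
      · simp
      · ring_nf
    · filter_upwards [hev] with w hw using h2 s w hw
  rw [h1, h3]; ring

lemma lap_quad (A B C : ℝ) (z : ℂ) :
    ContDiffAt ℝ 2 (fun w : ℂ => A * w.re ^ 2 + B * w.im ^ 2 + C * w.im) z ∧
    (Δ (fun w : ℂ => A * w.re ^ 2 + B * w.im ^ 2 + C * w.im)) z = 2 * A + 2 * B := by
  have hre : ContDiff ℝ 2 (fun w : ℂ => w.re) := Complex.reCLM.contDiff
  have him : ContDiff ℝ 2 (fun w : ℂ => w.im) := Complex.imCLM.contDiff
  have hc : ContDiffAt ℝ 2 (fun w : ℂ => A * w.re ^ 2 + B * w.im ^ 2 + C * w.im) z := by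
    apply ContDiff.contDiffAt; fun_prop
  refine ⟨hc, ?_⟩
  rw [← lap_eq hc, lap]
  have hx : pdx (fun w : ℂ => A * w.re ^ 2 + B * w.im ^ 2 + C * w.im) = fun w => 2 * A * w.re := by
    ext w
    apply pdx_of
    have := ((((re_line w).pow 2).const_mul A).add_const (B * w.im ^ 2)).add_const (C * w.im)
    simp only [add_zero] at this
    refine hda this (fun t => ?_) ?_
    · simp
    · ring
  have hy : pdy (fun w : ℂ => A * w.re ^ 2 + B * w.im ^ 2 + C * w.im) =
      fun w => 2 * B * w.im + C := by
    ext w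
    apply pdy_of
    have := ((((im_line w).pow 2).const_mul B).const_add (A * w.re ^ 2)).add
      ((im_line w).const_mul C)
    simp only [add_zero] at this
    refine hda this (fun t => ?_) ?_
    · simp
    · ring
  rw [hx, hy]
  congr 1
  · apply pdx_of
    have := (re_line z).const_mul (2 * A)
    simpa using this
  · apply pdy_of
    have := ((im_line z).const_mul (2 * B)).add_const C
    simpa using this

lemma sqnorm (z : ℂ) : ‖z‖ ^ 2 = z.re ^ 2 + z.im ^ 2 := by
  rw [Complex.sq_norm, Complex.normSq_apply]; ring

lemma norm_rpow_eq (s : ℝ) (z : ℂ) : ‖z‖ ^ s = (z.re ^ 2 + z.im ^ 2) ^ (s / 2) := by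
  rw [← sqnorm, ← Real.rpow_natCast_mul (norm_nonneg _)]
  congr 1; push_cast; ring

lemma lap_norm_rpow (s : ℝ) {z : ℂ} (hz : z ≠ 0) :
    ContDiffAt ℝ 2 (fun w : ℂ => ‖w‖ ^ s) z ∧
    (Δ (fun w : ℂ => ‖w‖ ^ s)) z = s ^ 2 * ‖z‖ ^ (s - 2) := by
  have hc : ContDiffAt ℝ 2 (fun w : ℂ => ‖w‖ ^ s) z :=
    (contDiffAt_norm ℝ hz).rpow_const_of_ne (norm_ne_zero_iff.2 hz)
  refine ⟨hc, ?_⟩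
  rw [← lap_eq hc, lap]
  have hq : ∀ w : ℂ, w ≠ 0 → w.re ^ 2 + w.im ^ 2 ≠ 0 := by
    intro w hw; rw [← sqnorm]; exact pow_ne_zero _ (norm_ne_zero_iff.2 hw)
  have qx : ∀ w : ℂ, HasDerivAt (fun t : ℝ => (w.re + t) ^ 2 + w.im ^ 2) (2 * w.re) 0 := by
    intro w; simpa using ((re_line w).pow 2).add_const (w.im ^ 2)
  have qy : ∀ w : ℂ, HasDerivAt (fun t : ℝ => w.re ^ 2 + (w.im + t) ^ 2) (2 * w.im) 0 := by
    intro w; simpa using ((im_line w).pow 2).const_add (w.re ^ 2)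
  have hev : ∀ᶠ w : ℂ in 𝓝 z, w ≠ 0 := isOpen_ne.mem_nhds hz
  have hx : ∀ w : ℂ, w ≠ 0 → pdx (fun w : ℂ => ‖w‖ ^ s) w =
      s * w.re * (w.re ^ 2 + w.im ^ 2) ^ (s / 2 - 1) := by
    intro w hw
    simp only [norm_rpow_eq]
    apply pdx_of
    have := (qx w).rpow_const (p := s / 2) (Or.inl (by simpa using hq w hw))
    simp only [add_zero] at this
    refine hda this (fun t => ?_) ?_
    · simp
    · ring
  have hy : ∀ w : ℂ, w ≠ 0 → pdy (fun w : ℂ => ‖w‖ ^ s) w =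
      s * w.im * (w.re ^ 2 + w.im ^ 2) ^ (s / 2 - 1) := by
    intro w hw
    simp only [norm_rpow_eq]
    apply pdy_of
    have := (qy w).rpow_const (p := s / 2) (Or.inl (by simpa using hq w hw))
    simp only [add_zero] at this
    refine hda this (fun t => ?_) ?_
    · simp
    · ring
  have hxx : pdx (pdx (fun w : ℂ => ‖w‖ ^ s)) z = s * (z.re ^ 2 + z.im ^ 2) ^ (s / 2 - 1)
      + s * z.re * (2 * z.re * (s / 2 - 1) * (z.re ^ 2 + z.im ^ 2) ^ (s / 2 - 1 - 1)) := by
    rw [pdx_congr (g := fun w : ℂ => s * w.re * (w.re ^ 2 + w.im ^ 2) ^ (s / 2 - 1))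
      (by filter_upwards [hev] with w hw using hx w hw)]
    apply pdx_of
    have := ((re_line z).const_mul s).mul
      ((qx z).rpow_const (p := s / 2 - 1) (Or.inl (by simpa using hq z hz)))
    simp only [add_zero] at this
    refine hda this (fun t => ?_) ?_
    · simp
    · ring
  have hyy : pdy (pdy (fun w : ℂ => ‖w‖ ^ s)) z = s * (z.re ^ 2 + z.im ^ 2) ^ (s / 2 - 1)
      + s * z.im * (2 * z.im * (s / 2 - 1) * (z.re ^ 2 + z.im ^ 2) ^ (s / 2 - 1 - 1)) := by
    rw [pdy_congr (g := fun w : ℂ => s * w.im * (w.re ^ 2 + w.im ^ 2) ^ (s / 2 - 1))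
      (by filter_upwards [hev] with w hw using hy w hw)]
    apply pdy_of
    have := ((im_line z).const_mul s).mul
      ((qy z).rpow_const (p := s / 2 - 1) (Or.inl (by simpa using hq z hz)))
    simp only [add_zero] at this
    refine hda this (fun t => ?_) ?_
    · simp
    · ring
  rw [hxx, hyy, norm_rpow_eq, show (s - 2) / 2 = s / 2 - 1 by ring,
    Real.rpow_sub_one (hq z hz) (s / 2 - 1)]
  have := hq z hz
  field_simp
  ring

lemma lap_log {z : ℂ} (hz : z ≠ 0) :
    ContDiffAt ℝ 2 (fun w : ℂ => Real.log ‖w‖) z ∧ (Δ (fun w : ℂ => Real.log ‖w‖)) z = 0 := by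
  have h := (analyticAt_id (𝕜 := ℂ) (z := z)).harmonicAt_log_norm (by simpa using hz)
  exact ⟨h.1, h.2.self_of_nhds⟩

lemma pd_log {z : ℂ} (hz : z ≠ 0) :
    pdx (fun w : ℂ => Real.log ‖w‖) z = z.re / ‖z‖ ^ 2 ∧
    pdy (fun w : ℂ => Real.log ‖w‖) z = z.im / ‖z‖ ^ 2 := by
  have hl : (fun w : ℂ => Real.log ‖w‖) = fun w : ℂ => Real.log (w.re ^ 2 + w.im ^ 2) / 2 := by
    ext w; rw [← sqnorm, Real.log_pow]; push_cast; ring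
  have hq : z.re ^ 2 + z.im ^ 2 ≠ 0 := by
    rw [← sqnorm]; exact pow_ne_zero _ (norm_ne_zero_iff.2 hz)
  have qx : HasDerivAt (fun t : ℝ => (z.re + t) ^ 2 + z.im ^ 2) (2 * z.re) 0 := by
    simpa using ((re_line z).pow 2).add_const (z.im ^ 2)
  have qy : HasDerivAt (fun t : ℝ => z.re ^ 2 + (z.im + t) ^ 2) (2 * z.im) 0 := by
    simpa using ((im_line z).pow 2).const_add (z.re ^ 2)
  rw [hl, sqnorm]
  constructor
  · apply pdx_of
    have := (qx.log (by simpa using hq)).div_const 2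
    simp only [add_zero] at this
    refine hda this (fun t => ?_) ?_
    · simp
    · ring
  · apply pdy_of
    have := (qy.log (by simpa using hq)).div_const 2
    simp only [add_zero] at this
    refine hda this (fun t => ?_) ?_
    · simp
    · ring

end S12

namespace S12

open InnerProductSpace Laplacian

lemma refl_bound {W b : ℂ → ℝ} {g : ℝ → ℝ} {d M : ℝ} (hd : 0 < d)
    (hM : ∀ ζ : ℂ, |ζ.re| ≤ d → |ζ.im| ≤ d → |W ζ| ≤ M)
    (hWc : ContinuousOn W {ζ : ℂ | |ζ.re| ≤ d ∧ |ζ.im| ≤ d})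
    (hW2 : ∀ ζ : ℂ, |ζ.re| ≤ d → |ζ.im| ≤ d → ζ.im ≠ 0 →
      ContDiffAt ℝ 2 W ζ ∧ |(Δ W) ζ| ≤ g ‖ζ‖)
    (hbc : Continuous b)
    (hb0 : ∀ ζ : ℂ, 0 ≤ ζ.im → ζ.im ≤ d → 0 ≤ b ζ)
    (hb2 : ∀ ζ : ℂ, |ζ.re| < d → 0 < ζ.im → ζ.im < d →
      ContDiffAt ℝ 2 b ζ ∧ (Δ b) ζ < - (2 * g ‖ζ‖)) :
    ∀ ζ : ℂ, |ζ.re| ≤ d → 0 ≤ ζ.im → ζ.im ≤ d →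
      W ζ - W ((starRingEnd ℂ) ζ) ≤ 2 * M / d ^ 2 * (ζ.re ^ 2 + ζ.im * (2 * d - ζ.im)) + b ζ := by
  set q : ℂ → ℝ := fun w => (2 * M / d ^ 2) * w.re ^ 2 + (-(2 * M / d ^ 2)) * w.im ^ 2
    + (4 * M / d) * w.im with hq
  have hqe : ∀ w, q w = 2 * M / d ^ 2 * (w.re ^ 2 + w.im * (2 * d - w.im)) := by
    intro w; simp only [hq]; field_simp; ring
  set W' : ℂ → ℝ := fun w => W (0 + Complex.conjLIE w) with hW'
  have hM0 : 0 ≤ M := (abs_nonneg _).trans (hM 0 (by simp [hd.le]) (by simp [hd.le]))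
  have hA : 0 ≤ 2 * M / d ^ 2 := by positivity
  set K : Set ℂ := {ζ : ℂ | |ζ.re| ≤ d ∧ 0 ≤ ζ.im ∧ ζ.im ≤ d} with hK
  set U : Set ℂ := {ζ : ℂ | |ζ.re| < d ∧ 0 < ζ.im ∧ ζ.im < d} with hU
  have hKc : IsCompact K := by
    apply Metric.isCompact_of_isClosed_isBounded
    · simp only [hK, Set.ofPred_and]
      refine IsClosed.inter (isClosed_le (by fun_prop) continuous_const) ?_
      exact (isClosed_le continuous_const (by fun_prop)).inter
        (isClosed_le (by fun_prop) continuous_const)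
    · refine (Metric.isBounded_closedBall (x := (0:ℂ)) (r := 2 * d)).subset ?_
      rintro ζ ⟨h1, h2, h3⟩
      have := Complex.norm_le_abs_re_add_abs_im ζ
      rw [abs_of_nonneg h2] at this
      simp only [mem_closedBall_zero_iff]; linarith
  have hUo : IsOpen U := by
    simp only [hU, Set.ofPred_and]
    refine IsOpen.inter (isOpen_lt (by fun_prop) continuous_const) ?_
    exact (isOpen_lt continuous_const (by fun_prop)).inter
      (isOpen_lt (by fun_prop) continuous_const)
  have hUK : U ⊆ K := fun ζ h => ⟨h.1.le, h.2.1.le, h.2.2.le⟩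
  have hqc : Continuous q := by simp only [hq]; fun_prop
  have hfc : ContinuousOn (W - W' - q - b) K := by
    refine ((ContinuousOn.sub ?_ ?_).sub hqc.continuousOn).sub hbc.continuousOn
    · refine hWc.mono ?_
      rintro ζ ⟨h1, h2, h3⟩
      exact ⟨h1, by rwa [abs_of_nonneg h2]⟩
    · refine hWc.comp (f := fun w => 0 + Complex.conjLIE w) (by fun_prop) ?_
      rintro ζ ⟨h1, h2, h3⟩
      refine ⟨by simpa using h1, by simpa [abs_of_nonneg h2] using h3⟩
  have key : ∀ z ∈ U, ContDiffAt ℝ 2 (W - W' - q - b) z ∧ 0 < (Δ (W - W' - q - b)) z := by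
    rintro ζ ⟨h1, h2, h3⟩
    obtain ⟨a1, a2⟩ := hW2 ζ h1.le (by rw [abs_of_pos h2]; exact h3.le) h2.ne'
    obtain ⟨b1, b2⟩ := hW2 (0 + Complex.conjLIE ζ) (by simpa using h1.le)
      (by simpa [abs_of_pos h2] using h3.le) (by simpa using h2.ne')
    obtain ⟨c1, c2⟩ := hb2 ζ h1 h2 h3
    obtain ⟨q1, q2⟩ := lap_quad (2 * M / d ^ 2) (-(2 * M / d ^ 2)) (4 * M / d) ζ
    replace q1 : ContDiffAt ℝ 2 q ζ := q1
    replace q2 : (Δ q) ζ = 2 * (2 * M / d ^ 2) + 2 * -(2 * M / d ^ 2) := q2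
    have hW'1 : ContDiffAt ℝ 2 W' ζ := by
      refine b1.comp ζ (f := fun w => 0 + Complex.conjLIE w) ?_
      exact contDiffAt_const.add Complex.conjLIE.contDiff.contDiffAt
    have hW'2 : (Δ W') ζ = (Δ W) (0 + Complex.conjLIE ζ) := lap_comp_isom _ _ _ _
    have s1 : ContDiffAt ℝ 2 (W - W') ζ := a1.sub hW'1
    have s2 : ContDiffAt ℝ 2 (W - W' - q) ζ := s1.sub q1
    refine ⟨s2.sub c1, ?_⟩
    rw [ContDiffAt.laplacian_sub s2 c1,
      ContDiffAt.laplacian_sub s1 q1, ContDiffAt.laplacian_sub a1 hW'1, hW'2, q2]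
    have hn : ‖0 + Complex.conjLIE ζ‖ = ‖ζ‖ := by simp
    rw [hn] at b2
    have := abs_le.1 a2
    have := abs_le.1 b2
    linarith
  have := max_principle hKc hUo hUK hfc (fun z hz => (key z hz).1) (fun z hz => (key z hz).2) ?_
  · intro ζ h1 h2 h3
    have := this ζ ⟨h1, h2, h3⟩
    simp only [Pi.sub_apply, hqe, hW', zero_add, Complex.conjLIE_apply] at this
    linarith
  · rintro ζ ⟨h1, h2, h3⟩ hnU
    have hb := hb0 ζ h2 h3
    simp only [Pi.sub_apply, hqe, hW', zero_add, Complex.conjLIE_apply]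
    have h1' := abs_le.1 h1
    rcases h2.eq_or_lt with h0 | h0
    · have : (starRingEnd ℂ) ζ = ζ := by
        apply Complex.ext <;> simp [← h0]
      rw [this, ← h0]
      have : 0 ≤ 2 * M / d ^ 2 * (ζ.re ^ 2 + 0 * (2 * d - 0)) := by
        rw [zero_mul, add_zero]; positivity
      linarith
    · have hw1 := abs_le.1 (hM ζ h1 (by rwa [abs_of_pos h0]))
      have hw2 := abs_le.1 (hM ((starRingEnd ℂ) ζ) (by simpa using h1)
        (by simpa [abs_of_pos h0] using h3))
      have hdd : d ^ 2 ≤ ζ.re ^ 2 + ζ.im * (2 * d - ζ.im) := by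
        by_contra! hc
        apply hnU
        refine ⟨?_, h0, ?_⟩
        · by_contra! h4
          have : |ζ.re| ^ 2 = ζ.re ^ 2 := sq_abs _
          nlinarith
        · by_contra! h4
          have : ζ.im = d := le_antisymm h3 h4
          rw [this] at hc
          nlinarith [sq_nonneg ζ.re]
      have : 2 * M / d ^ 2 * d ^ 2 ≤ 2 * M / d ^ 2 * (ζ.re ^ 2 + ζ.im * (2 * d - ζ.im)) :=
        mul_le_mul_of_nonneg_left hdd hA
      have h5 : 2 * M / d ^ 2 * d ^ 2 = 2 * M := by field_simp
      linarith

end S12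

namespace S12

open InnerProductSpace Laplacian

lemma osc {w : ℂ → ℝ} {R M B ε : ℝ} (hR : 0 < R) (hR1 : R ≤ 1) (hε : 0 < ε) (hε1 : ε < 1)
    (hB : 0 < B) (hM : ∀ z : ℂ, ‖z‖ < R → |w z| ≤ M) (hc : ContinuousAt w 0)
    (h2 : ∀ z : ℂ, 0 < ‖z‖ → ‖z‖ < R → ContDiffAt ℝ 2 w z ∧ |(Δ w) z| ≤ B * ‖z‖ ^ (ε - 2)) :
    ∃ K : ℝ, ∀ z z' : ℂ, ‖z'‖ = ‖z‖ → 0 < ‖z‖ → ‖z‖ ≤ R / 4 → w z - w z' ≤ K * ‖z‖ ^ ε := by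
  set d := R / 4 with hd
  have hd0 : 0 < d := by positivity
  have hM0 : 0 ≤ M := (abs_nonneg _).trans (hM 0 (by simpa using hR))
  set A := 3 * B / (ε * (1 - ε)) with hA
  have h1ε : 0 < 1 - ε := by linarith
  have hA0 : 0 < A := by positivity
  have hcont : ∀ z : ℂ, ‖z‖ < R → ContinuousAt w z := by
    intro z hz
    rcases eq_or_ne z 0 with rfl | h0
    · exact hc
    · exact (h2 z (norm_pos_iff.2 h0) hz).1.continuousAt
  have hbd : ∀ ζ : ℂ, |ζ.re| ≤ d → |ζ.im| ≤ d → ‖ζ‖ < R := by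
    intro ζ h1 h2
    have := Complex.norm_le_abs_re_add_abs_im ζ
    linarith
  have main : ∀ e : Circle, ∀ ζ : ℂ, |ζ.re| ≤ d → 0 ≤ ζ.im → ζ.im ≤ d →
      w (e * ζ) - w (e * (starRingEnd ℂ) ζ) ≤
        2 * M / d ^ 2 * (ζ.re ^ 2 + ζ.im * (2 * d - ζ.im)) + A * ζ.im ^ ε := by
    intro e
    have hne : ∀ ζ : ℂ, ‖0 + rotation e ζ‖ = ‖ζ‖ := by intro ζ; rw [zero_add, LinearIsometryEquiv.norm_map]
    have := refl_bound (W := fun ζ => w (0 + rotation e ζ)) (b := A • fun ζ : ℂ => ζ.im ^ ε)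
      (g := fun r => B * r ^ (ε - 2)) (d := d) (M := M) hd0 ?_ ?_ ?_ ?_ ?_ ?_
    · intro ζ k1 k2 k3
      simpa using this ζ k1 k2 k3
    · intro ζ k1 k2
      exact hM _ (by rw [hne]; exact hbd ζ k1 k2)
    · rintro ζ ⟨k1, k2⟩
      apply ContinuousAt.continuousWithinAt
      refine ContinuousAt.comp (f := fun ζ => 0 + rotation e ζ)
        (hcont _ (by rw [hne]; exact hbd ζ k1 k2)) ?_
      fun_prop
    · intro ζ k1 k2 k3
      have hζ : 0 < ‖ζ‖ := norm_pos_iff.2 (by rintro rfl; simp at k3)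
      obtain ⟨l1, l2⟩ := h2 (0 + rotation e ζ) (by rwa [hne]) (by rw [hne]; exact hbd ζ k1 k2)
      rw [hne] at l2
      refine ⟨?_, ?_⟩
      · refine l1.comp ζ (f := fun ζ => 0 + rotation e ζ) ?_
        exact contDiffAt_const.add (rotation e).contDiff.contDiffAt
      · rw [lap_comp_isom]; exact l2
    · exact (Complex.continuous_im.rpow_const (fun _ => Or.inr hε.le)).const_smul A
    · intro ζ k1 k2
      simp only [Pi.smul_apply, smul_eq_mul]
      positivity
    · intro ζ k1 k2 k3
      obtain ⟨l1, l2⟩ := lap_im_rpow ε k2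
      refine ⟨l1.const_smul A, ?_⟩
      rw [laplacian_smul A l1, l2, smul_eq_mul]
      have e1 : A * (ε * (ε - 1) * ζ.im ^ (ε - 2)) = - (3 * B * ζ.im ^ (ε - 2)) := by
        rw [hA]; field_simp; ring
      have e2 : ‖ζ‖ ^ (ε - 2) ≤ ζ.im ^ (ε - 2) :=
        Real.rpow_le_rpow_of_nonpos k2 ((le_abs_self _).trans (Complex.abs_im_le_norm ζ))
          (by linarith)
      have e3 : 0 < ζ.im ^ (ε - 2) := Real.rpow_pos_of_pos k2 _
      rw [e1]
      nlinarith
  refine ⟨2 * M / d ^ 2 * (3 * d) + A, ?_⟩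
  intro z z' hzz hz hzd
  have fin : ∀ e : Circle, ∀ ζ : ℂ, 0 ≤ ζ.im → ‖ζ‖ = ‖z‖ →
      w (e * ζ) - w (e * (starRingEnd ℂ) ζ) ≤ (2 * M / d ^ 2 * (3 * d) + A) * ‖z‖ ^ ε := by
    intro e ζ k1 k2
    have i1 := Complex.abs_im_le_norm ζ
    have i2 := Complex.abs_re_le_norm ζ
    rw [abs_of_nonneg k1] at i1
    have := main e ζ (by linarith) k1 (by linarith)
    refine this.trans ?_
    rw [add_mul, mul_assoc (2 * M / d ^ 2)]
    have j1 : ζ.im ^ ε ≤ ‖z‖ ^ ε := by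
      rw [← k2]; exact Real.rpow_le_rpow k1 i1 hε.le
    have j2 : ‖z‖ ≤ ‖z‖ ^ ε := by
      conv_lhs => rw [← Real.rpow_one ‖z‖]
      exact Real.rpow_le_rpow_of_exponent_ge hz (by linarith) hε1.le
    have j3 : ζ.re ^ 2 + ζ.im * (2 * d - ζ.im) ≤ 3 * d * ‖z‖ ^ ε := by
      have := sqnorm ζ
      rw [k2] at this i1
      nlinarith [sq_nonneg ζ.im]
    gcongr
  obtain ⟨s, hs⟩ := IsAlgClosed.exists_pow_nat_eq (z * z' / (‖z‖ : ℂ) ^ 2) (n := 2) (by norm_num)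
  have hz0 : (‖z‖ : ℂ) ≠ 0 := by exact_mod_cast hz.ne'
  have hsn : ‖s‖ = 1 := by
    have : ‖s‖ ^ 2 = 1 := by
      rw [← norm_pow, hs]
      simp [hzz]
      field_simp
    nlinarith [norm_nonneg s]
  have hss : s * (starRingEnd ℂ) s = 1 := by
    rw [Complex.mul_conj, Complex.normSq_eq_norm_sq, hsn]; simp
  have hzz2 : z * (starRingEnd ℂ) z = (‖z‖ : ℂ) ^ 2 := by
    rw [Complex.mul_conj, Complex.normSq_eq_norm_sq]; simp
  have t1 : s * ((starRingEnd ℂ) s * z) = z := by rw [← mul_assoc, hss, one_mul]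
  have t2 : s * (starRingEnd ℂ) ((starRingEnd ℂ) s * z) = z' := by
    rw [map_mul, Complex.conj_conj, ← mul_assoc, ← pow_two, hs]
    field_simp
    rw [← hzz2]; ring
  set ec : Circle := ⟨s, by simp [Submonoid.unitSphere, hsn]⟩ with hec
  have hecs : (ec : ℂ) = s := rfl
  have hnn : ‖(starRingEnd ℂ) s * z‖ = ‖z‖ := by simp [hsn]
  rcases le_total 0 ((starRingEnd ℂ) s * z).im with h0 | h0
  · have := fin ec _ h0 hnn
    rwa [hecs, t1, t2] at this
  · have := fin (-ec) (-((starRingEnd ℂ) s * z)) (by simpa using h0) (by rw [norm_neg]; exact hnn)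
    rw [map_neg] at this
    have hneg : ((-ec : Circle) : ℂ) = -s := rfl
    rwa [hneg, neg_mul_neg, neg_mul_neg, t1, t2] at this

end S12

namespace S12

open InnerProductSpace Laplacian

lemma mean_lower {w : ℂ → ℝ} {R M B ε : ℝ} (hε : 0 < ε)
    (hB : 0 < B) (hM : ∀ z : ℂ, ‖z‖ < R → |w z| ≤ M) (hc : ContinuousAt w 0) (hw0 : w 0 = 0)
    (h2 : ∀ z : ℂ, 0 < ‖z‖ → ‖z‖ < R → ContDiffAt ℝ 2 w z ∧ |(Δ w) z| ≤ B * ‖z‖ ^ (ε - 2))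
    {r k : ℝ} (hr : 0 < r) (hrR : r < R) (hk : ∀ z : ℂ, ‖z‖ = r → w z ≤ k) :
    -(2 * B / ε ^ 2 * r ^ ε) ≤ k := by
  set A := 2 * B / ε ^ 2 with hA
  have hA0 : 0 < A := by positivity
  have claim1 : ∀ η : ℝ, 0 < η → ∀ z : ℂ, 0 < ‖z‖ → ‖z‖ ≤ r →
      w z + A * ‖z‖ ^ ε + η * Real.log ‖z‖ + (-(k + A * r ^ ε + η * Real.log r)) ≤ 0 := by
    intro η hη z hz hzr
    set ρ := min ‖z‖ (r * Real.exp (-(M + |k|) / η)) with hρ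
    have hρ0 : 0 < ρ := lt_min hz (by positivity)
    have hρr : ρ ≤ r := (min_le_left _ _).trans hzr
    have hρlog : η * Real.log ρ ≤ η * Real.log r - (M + |k|) := by
      have : Real.log ρ ≤ Real.log r + (-(M + |k|) / η) := by
        rw [← Real.log_exp (-(M + |k|) / η), ← Real.log_mul hr.ne' (Real.exp_pos _).ne']
        exact Real.log_le_log hρ0 (min_le_right _ _)
      calc η * Real.log ρ ≤ η * (Real.log r + (-(M + |k|) / η)) :=
            mul_le_mul_of_nonneg_left this hη.le
        _ = _ := by field_simp; ring
    set K : Set ℂ := {x : ℂ | ρ ≤ ‖x‖ ∧ ‖x‖ ≤ r} with hK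
    set U : Set ℂ := {x : ℂ | ρ < ‖x‖ ∧ ‖x‖ < r} with hU
    have hKc : IsCompact K := by
      apply Metric.isCompact_of_isClosed_isBounded
      · simp only [hK, Set.ofPred_and]
        exact (isClosed_le continuous_const (by fun_prop)).inter
          (isClosed_le (by fun_prop) continuous_const)
      · refine (Metric.isBounded_closedBall (x := (0:ℂ)) (r := r)).subset ?_
        rintro ζ ⟨h1, h2⟩
        simpa using h2
    have hUo : IsOpen U := by
      simp only [hU, Set.ofPred_and]
      exact (isOpen_lt continuous_const (by fun_prop)).inter
        (isOpen_lt (by fun_prop) continuous_const)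
    have hUK : U ⊆ K := fun ζ h => ⟨h.1.le, h.2.le⟩
    set f : ℂ → ℝ := w + (A • fun x : ℂ => ‖x‖ ^ ε) + (η • fun x : ℂ => Real.log ‖x‖) +
      (fun _ : ℂ => -(k + A * r ^ ε + η * Real.log r)) with hf
    have key : ∀ x : ℂ, ρ ≤ ‖x‖ → ‖x‖ ≤ r → ContDiffAt ℝ 2 f x ∧ 0 < (Δ f) x := by
      intro x hx1 hx2
      have hx0 : 0 < ‖x‖ := hρ0.trans_le hx1
      have hxne : x ≠ 0 := norm_pos_iff.1 hx0
      obtain ⟨a1, a2⟩ := h2 x hx0 (hx2.trans_lt hrR)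
      obtain ⟨b1, b2⟩ := lap_norm_rpow ε hxne
      obtain ⟨c1, c2⟩ := lap_log hxne
      have b1' : ContDiffAt ℝ 2 (A • fun x : ℂ => ‖x‖ ^ ε) x := b1.const_smul A
      have c1' : ContDiffAt ℝ 2 (η • fun x : ℂ => Real.log ‖x‖) x := c1.const_smul η
      have s1 : ContDiffAt ℝ 2 (w + (A • fun x : ℂ => ‖x‖ ^ ε)) x := a1.add b1'
      have s2 : ContDiffAt ℝ 2 (w + (A • fun x : ℂ => ‖x‖ ^ ε) +
        (η • fun x : ℂ => Real.log ‖x‖)) x := s1.add c1'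
      have s3 : ContDiffAt ℝ 2 (fun _ : ℂ => -(k + A * r ^ ε + η * Real.log r)) x :=
        contDiffAt_const
      refine ⟨s2.add s3, ?_⟩
      rw [hf, ContDiffAt.laplacian_add s2 s3, ContDiffAt.laplacian_add s1 c1',
        ContDiffAt.laplacian_add a1 b1', laplacian_smul A b1, laplacian_smul η c1, b2, c2]
      have e0 : (Δ (fun _ : ℂ => -(k + A * r ^ ε + η * Real.log r))) x = 0 := by
        rw [laplacian_const]; rfl
      rw [e0]
      have e1 : A • (ε ^ 2 * ‖x‖ ^ (ε - 2)) = 2 * B * ‖x‖ ^ (ε - 2) := by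
        rw [hA, smul_eq_mul]; field_simp
      have e3 : 0 < B * ‖x‖ ^ (ε - 2) := mul_pos hB (Real.rpow_pos_of_pos hx0 _)
      rw [e1]
      have := (abs_le.1 a2).1
      simp only [smul_zero]
      linarith
    have hfx : ∀ x, f x = w x + A * ‖x‖ ^ ε + η * Real.log ‖x‖ +
        (-(k + A * r ^ ε + η * Real.log r)) := by
      intro x; simp [hf]
    have := max_principle hKc hUo hUK (f := f)
      (fun x hx => (key x hx.1 hx.2).1.continuousAt.continuousWithinAt)
      (fun x hx => (key x hx.1.le hx.2.le).1) (fun x hx => (key x hx.1.le hx.2.le).2) ?_ z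
      ⟨min_le_left _ _, hzr⟩
    · rwa [hfx] at this
    · rintro x ⟨hx1, hx2⟩ hxU
      rw [hfx]
      rcases hx2.eq_or_lt with h0 | h0
      · have := hk x h0
        rw [h0]; linarith
      · have hx3 : ‖x‖ = ρ := by
          by_contra hne
          exact hxU ⟨lt_of_le_of_ne hx1 (Ne.symm hne), h0⟩
        have j1 := (abs_le.1 (hM x (h0.trans hrR))).2
        have j2 : A * ‖x‖ ^ ε ≤ A * r ^ ε := by gcongr
        rw [hx3] at j2 ⊢
        have := neg_abs_le k
        linarith
  have claim2 : ∀ z : ℂ, 0 < ‖z‖ → ‖z‖ ≤ r → w z + A * ‖z‖ ^ ε ≤ k + A * r ^ ε := by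
    intro z hz hzr
    by_contra! hcon
    set X := w z + A * ‖z‖ ^ ε - (k + A * r ^ ε) with hX
    have hX0 : 0 < X := by linarith
    set L := Real.log r - Real.log ‖z‖ with hL
    have hL0 : 0 ≤ L := by have := Real.log_le_log hz hzr; linarith
    have := claim1 (X / (L + 1)) (by positivity) z hz hzr
    have h3 : X ≤ X / (L + 1) * L := by
      rw [hX, hL] at *; linarith
    have h4 : X / (L + 1) * L < X := by
      rw [div_mul_eq_mul_div, div_lt_iff₀ (by positivity)]; nlinarith
    linarith
  have hlim : Tendsto (fun z : ℂ => w z + A * ‖z‖ ^ ε) (𝓝[≠] 0) (𝓝 0) := by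
    have h1 : ContinuousAt (fun z : ℂ => w z + A * ‖z‖ ^ ε) 0 :=
      hc.add (continuousAt_const.mul
        ((continuous_norm.rpow_const (fun _ => Or.inr hε.le)).continuousAt))
    have h3 := h1.tendsto
    simp only [hw0, norm_zero, Real.zero_rpow hε.ne', mul_zero, add_zero] at h3
    exact h3.mono_left nhdsWithin_le_nhds
  have : 0 ≤ k + A * r ^ ε := by
    refine le_of_tendsto hlim ?_
    have h5 : ∀ᶠ z : ℂ in 𝓝[≠] 0, ‖z‖ < r := by
      refine nhdsWithin_le_nhds ?_
      have := Metric.ball_mem_nhds (0:ℂ) hr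
      filter_upwards [this] with z hz
      simpa using hz
    filter_upwards [h5, self_mem_nhdsWithin] with z hz1 hz2
    exact claim2 z (norm_pos_iff.2 hz2) hz1.le
  linarith

lemma lower {w : ℂ → ℝ} {R M B ε : ℝ} (hR : 0 < R) (hR1 : R ≤ 1) (hε : 0 < ε) (hε1 : ε < 1)
    (hB : 0 < B) (hM : ∀ z : ℂ, ‖z‖ < R → |w z| ≤ M) (hc : ContinuousAt w 0) (hw0 : w 0 = 0)
    (h2 : ∀ z : ℂ, 0 < ‖z‖ → ‖z‖ < R → ContDiffAt ℝ 2 w z ∧ |(Δ w) z| ≤ B * ‖z‖ ^ (ε - 2)) :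
    ∃ C : ℝ, ∀ z : ℂ, 0 < ‖z‖ → ‖z‖ ≤ R / 4 → -(C * ‖z‖ ^ ε) ≤ w z := by
  obtain ⟨K, hK⟩ := osc hR hR1 hε hε1 hB hM hc h2
  refine ⟨2 * B / ε ^ 2 + K, fun z hz hzR => ?_⟩
  have := mean_lower hε hB hM hc hw0 h2 (r := ‖z‖) (k := w z + K * ‖z‖ ^ ε) hz (by linarith) ?_
  · linarith
  · intro z' hz'
    have := hK z' z hz'.symm (by rwa [hz']) (by rwa [hz'])
    rw [hz'] at this
    linarith

lemma decay {w : ℂ → ℝ} {R M B ε : ℝ} (hR : 0 < R) (hR1 : R ≤ 1) (hε : 0 < ε) (hε1 : ε < 1)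
    (hB : 0 < B) (hM : ∀ z : ℂ, ‖z‖ < R → |w z| ≤ M) (hc : ContinuousAt w 0) (hw0 : w 0 = 0)
    (h2 : ∀ z : ℂ, 0 < ‖z‖ → ‖z‖ < R → ContDiffAt ℝ 2 w z ∧ |(Δ w) z| ≤ B * ‖z‖ ^ (ε - 2)) :
    ∃ C : ℝ, 0 < C ∧ ∀ z : ℂ, 0 < ‖z‖ → ‖z‖ ≤ R / 4 → |w z| ≤ C * ‖z‖ ^ ε := by
  obtain ⟨C1, hC1⟩ := lower hR hR1 hε hε1 hB hM hc hw0 h2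
  obtain ⟨C2, hC2⟩ := lower (w := -w) hR hR1 hε hε1 hB
    (fun z hz => by simpa using hM z hz) hc.neg (by simpa using hw0)
    (fun z k1 k2 => by
      obtain ⟨a1, a2⟩ := h2 z k1 k2
      refine ⟨a1.neg, ?_⟩
      rw [laplacian_neg]; simpa using a2)
  refine ⟨|C1| + |C2| + 1, by positivity, fun z hz hzR => ?_⟩
  have h1 := hC1 z hz hzR
  have h3 := hC2 z hz hzR
  simp only [Pi.neg_apply] at h3
  have hp : 0 < ‖z‖ ^ ε := Real.rpow_pos_of_pos hz _
  have := le_abs_self C1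
  have := le_abs_self C2
  have := abs_nonneg C1
  have := abs_nonneg C2
  rw [abs_le]
  constructor <;> nlinarith

lemma grad_bound {w : ℂ → ℝ} {p : ℂ} {d M B : ℝ} (hd : 0 < d) (hB : 0 < B)
    (h2 : ∀ z : ℂ, ‖z - p‖ ≤ 2 * d → ContDiffAt ℝ 2 w z ∧ |w z| ≤ M ∧ |(Δ w) z| ≤ B) (c : Circle) :
    2 * fderiv ℝ w p (c * I) ≤ 4 * M / d + 3 * B * d / 2 := by
  have hp := h2 p (by simpa using hd.le)
  have hM0 : 0 ≤ M := (abs_nonneg _).trans hp.2.1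
  have hbd : ∀ ζ : ℂ, |ζ.re| ≤ d → |ζ.im| ≤ d → ‖(p + rotation c ζ) - p‖ ≤ 2 * d := by
    intro ζ h1 h2
    have := Complex.norm_le_abs_re_add_abs_im ζ
    rw [add_sub_cancel_left, LinearIsometryEquiv.norm_map]
    linarith
  have main := refl_bound (W := fun ζ => w (p + rotation c ζ))
    (b := fun ζ : ℂ => 0 * ζ.re ^ 2 + (-(3 * B / 2)) * ζ.im ^ 2 + (3 * B * d / 2) * ζ.im)
    (g := fun _ => B) (d := d) (M := M) hd
    (fun ζ k1 k2 => (h2 _ (hbd ζ k1 k2)).2.1) ?_ ?_ (by fun_prop) ?_ ?_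
  · have hle : ∀ t : ℝ, 0 < t → t ≤ d → w (p + t * (c * I)) - w (p + (-t) * (c * I)) ≤
        t * (4 * M / d + 3 * B * d / 2) := by
      intro t ht htd
      have := main (t * I) (by simpa using hd.le) (by simpa using ht.le) (by simpa using htd)
      simp only [rotation_apply] at this
      have e1 : (c : ℂ) * (t * I) = t * (c * I) := by ring
      have e2 : (c : ℂ) * (starRingEnd ℂ) (t * I) = (-t) * (c * I) := by simp; ring
      rw [e1, e2] at this
      refine this.trans ?_
      simp only [mul_re, ofReal_re, I_re, mul_zero, ofReal_im, I_im, mul_one, sub_self, mul_im,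
        zero_add, add_zero]
      have e3 : t * (4 * M / d + 3 * B * d / 2) - (2 * M / d ^ 2 * (0 ^ 2 + t * (2 * d - t)) +
        (0 * 0 ^ 2 + -(3 * B / 2) * t ^ 2 + 3 * B * d / 2 * t)) =
          2 * M / d ^ 2 * t ^ 2 + 3 * B / 2 * t ^ 2 := by
        field_simp; ring
      have e4 : 0 ≤ 2 * M / d ^ 2 * t ^ 2 + 3 * B / 2 * t ^ 2 := by positivity
      linarith
    have hder : HasDerivAt (fun t : ℝ => w (p + t * (c * I)) - w (p + (-t) * (c * I)))
        (2 * fderiv ℝ w p (c * I)) 0 := by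
      have hw := hp.1.differentiableAt (by simp)
      have a1 := hasDerivAt_line hw (c * I)
      have a2 := hasDerivAt_line hw (-(c * I))
      rw [map_neg] at a2
      refine hda (a1.sub a2) (fun t => ?_) (by ring)
      simp
    have hs := hder.tendsto_slope_zero_right
    refine le_of_tendsto hs ?_
    filter_upwards [Ioc_mem_nhdsGT hd] with t ht
    have := hle t ht.1 ht.2
    simp only [zero_add, ofReal_zero, zero_mul, neg_zero, sub_self, sub_zero, smul_eq_mul]
    rw [inv_mul_le_iff₀ ht.1]
    exact this
  · rintro ζ ⟨k1, k2⟩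
    apply ContinuousAt.continuousWithinAt
    refine ContinuousAt.comp (f := fun ζ => p + rotation c ζ)
      (h2 _ (hbd ζ k1 k2)).1.continuousAt ?_
    fun_prop
  · intro ζ k1 k2 k3
    obtain ⟨l1, -, l2⟩ := h2 (p + rotation c ζ) (hbd ζ k1 k2)
    refine ⟨?_, ?_⟩
    · refine l1.comp ζ (f := fun ζ => p + rotation c ζ) ?_
      exact contDiffAt_const.add (rotation c).contDiff.contDiffAt
    · rw [lap_comp_isom]; exact l2
  · intro ζ k1 k2
    have : 0 ≤ 3 * B / 2 * (ζ.im * (d - ζ.im)) :=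
      mul_nonneg (by positivity) (mul_nonneg k1 (by linarith))
    linarith
  · intro ζ k1 k2 k3
    obtain ⟨l1, l2⟩ := lap_quad 0 (-(3 * B / 2)) (3 * B * d / 2) ζ
    refine ⟨l1, ?_⟩
    rw [l2]; linarith

lemma core {w : ℂ → ℝ} {R M B ε : ℝ} (hR : 0 < R) (hR1 : R ≤ 1) (hε : 0 < ε) (hε1 : ε < 1)
    (hB : 0 < B) (hM : ∀ z : ℂ, ‖z‖ < R → |w z| ≤ M) (hc : ContinuousAt w 0) (hw0 : w 0 = 0)
    (h2 : ∀ z : ℂ, 0 < ‖z‖ → ‖z‖ < R → ContDiffAt ℝ 2 w z ∧ |(Δ w) z| ≤ B * ‖z‖ ^ (ε - 2)) :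
    ∃ C : ℝ, ∀ z : ℂ, 0 < ‖z‖ → ‖z‖ ≤ R / 8 → ∀ c : Circle,
      ‖z‖ * fderiv ℝ w z (c * I) ≤ C * ‖z‖ ^ ε := by
  obtain ⟨C, hC0, hC⟩ := decay hR hR1 hε hε1 hB hM hc hw0 h2
  refine ⟨16 * C + 3 / 4 * B, fun p hp hpR c => ?_⟩
  have hpe : 0 < ‖p‖ ^ ε := Real.rpow_pos_of_pos hp _
  have hpe2 : ‖p‖ ^ (ε - 2) * ‖p‖ ^ 2 = ‖p‖ ^ ε := by
    rw [← Real.rpow_natCast, ← Real.rpow_add hp]; norm_num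
  have hpe3 : 0 < ‖p‖ ^ (ε - 2) := Real.rpow_pos_of_pos hp _
  have := grad_bound (w := w) (p := p) (d := ‖p‖ / 4) (M := C * (2 * ‖p‖ ^ ε))
    (B := B * (4 * ‖p‖ ^ (ε - 2))) (by positivity) (by positivity) ?_ c
  · have h3 : ‖p‖ * (2 * fderiv ℝ w p (c * I)) ≤
        ‖p‖ * (4 * (C * (2 * ‖p‖ ^ ε)) / (‖p‖ / 4) +
          3 * (B * (4 * ‖p‖ ^ (ε - 2))) * (‖p‖ / 4) / 2) := mul_le_mul_of_nonneg_left this hp.le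
    have h4 : ‖p‖ * (4 * (C * (2 * ‖p‖ ^ ε)) / (‖p‖ / 4) +
          3 * (B * (4 * ‖p‖ ^ (ε - 2))) * (‖p‖ / 4) / 2) =
        32 * C * ‖p‖ ^ ε + 3 / 2 * B * (‖p‖ ^ (ε - 2) * ‖p‖ ^ 2) := by
      field_simp; ring
    rw [h4, hpe2] at h3
    linarith
  · intro z hz
    have n1 : ‖z‖ ≤ 2 * ‖p‖ := by
      have := norm_le_norm_add_norm_sub' z p
      linarith
    have n2 : ‖p‖ / 2 ≤ ‖z‖ := by
      have := norm_le_norm_add_norm_sub' p z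
      rw [norm_sub_rev] at this
      linarith
    have n3 : 0 < ‖z‖ := by linarith
    obtain ⟨a1, a2⟩ := h2 z n3 (by linarith)
    refine ⟨a1, (hC z n3 (by linarith)).trans ?_, a2.trans ?_⟩
    · gcongr
      calc ‖z‖ ^ ε ≤ (2 * ‖p‖) ^ ε := by gcongr
        _ = 2 ^ ε * ‖p‖ ^ ε := Real.mul_rpow (by norm_num) hp.le
        _ ≤ 2 ^ (1:ℝ) * ‖p‖ ^ ε := by gcongr; norm_num
        _ = _ := by norm_num
    · gcongr
      calc ‖z‖ ^ (ε - 2) ≤ (‖p‖ / 2) ^ (ε - 2) :=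
            Real.rpow_le_rpow_of_nonpos (by positivity) n2 (by linarith)
        _ = (‖p‖ ^ (ε - 2)) * 2 ^ (2 - ε) := by
            rw [Real.div_rpow hp.le (by norm_num), div_eq_mul_inv, ← Real.rpow_neg (by norm_num),
              neg_sub]
        _ ≤ (‖p‖ ^ (ε - 2)) * 2 ^ (2:ℝ) := by gcongr; norm_num; linarith
        _ = _ := by norm_num; ring

end S12

namespace S12

open InnerProductSpace Laplacian

lemma isOpen_PDisc : IsOpen PDisc := by
  have : PDisc = {z : ℂ | 0 < ‖z‖} ∩ {z : ℂ | ‖z‖ < 1} := rfl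
  rw [this]
  exact (isOpen_lt continuous_const continuous_norm).inter
    (isOpen_lt continuous_norm continuous_const)

/-- Bounds on the coefficients. -/
lemma coef_bounds {a β c CG ε r E X Y v : ℝ} {N n : ℤ} (hn : n = if a = 0 then N else min (-1) N)
    (hε : ε ≤ (n : ℝ) + 1 - β) (hr : 0 < r) (hr1 : r < 1) (hCG : 0 ≤ CG)
    (hE : E = Real.exp (v + c - β * Real.log r)) (hv : |v| ≤ 1)
    (hX : |X| ≤ r ^ N * CG) (hY : |Y| ≤ r ^ N * CG) :
    0 < E ∧ E * r * |X| ≤ (Real.exp (1 + c) * (CG + |a|) + 1) * r ^ ε ∧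
    E * r * |Y| ≤ (Real.exp (1 + c) * (CG + |a|) + 1) * r ^ ε ∧
    E * |a| ≤ (Real.exp (1 + c) * (CG + |a|) + 1) * r ^ ε := by
  set K := Real.exp (1 + c) with hK
  have hK0 : 0 < K := Real.exp_pos _
  have hE0 : 0 < E := by rw [hE]; exact Real.exp_pos _
  have hrε : 0 < r ^ ε := by positivity
  have hEK : E ≤ K * r ^ (-β) := by
    rw [hE, Real.rpow_def_of_pos hr, ← Real.exp_add]
    apply Real.exp_le_exp.2
    have := (abs_le.1 hv).2
    linarith
  have hnN : (n : ℝ) ≤ N := by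
    have : n ≤ N := by
      rw [hn]; split_ifs
      · exact le_rfl
      · exact min_le_right _ _
    exact_mod_cast this
  have hXX : ∀ X : ℝ, |X| ≤ r ^ N * CG → E * r * |X| ≤ (K * (CG + |a|) + 1) * r ^ ε := by
    intro X hX
    calc E * r * |X| ≤ (K * r ^ (-β)) * r * (r ^ N * CG) := by gcongr
      _ = K * CG * r ^ (-β + 1 + N) := by
          rw [Real.rpow_add hr, Real.rpow_add hr, Real.rpow_one, Real.rpow_intCast]; ring
      _ ≤ K * CG * r ^ ε := by
          apply mul_le_mul_of_nonneg_left _ (by positivity)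
          apply Real.rpow_le_rpow_of_exponent_ge hr hr1.le; linarith
      _ ≤ _ := by
          apply mul_le_mul_of_nonneg_right _ hrε.le
          nlinarith [mul_nonneg hK0.le (abs_nonneg a)]
  refine ⟨hE0, hXX X hX, hXX Y hY, ?_⟩
  by_cases ha : a = 0
  · rw [ha]; simp; positivity
  · have hn1 : (n : ℝ) ≤ -1 := by
      have : n ≤ -1 := by
        rw [hn, if_neg ha]; exact min_le_left _ _
      exact_mod_cast this
    calc E * |a| ≤ K * r ^ (-β) * |a| := by gcongr
      _ ≤ K * r ^ ε * |a| := by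
          gcongr ?_ * |a|
          apply mul_le_mul_of_nonneg_left _ hK0.le
          apply Real.rpow_le_rpow_of_exponent_ge hr hr1.le; linarith
      _ ≤ _ := by
          nlinarith [mul_nonneg hK0.le hCG, mul_nonneg (mul_nonneg hK0.le hCG) hrε.le]

lemma abs_lin {r D T x y P Q E : ℝ} (hE : 0 ≤ E) (hx : |x| ≤ r) (hy : |y| ≤ r)
    (hP : E * r * |P| ≤ D) (hQ : E * r * |Q| ≤ D) (hT : T = E * (x * P + y * Q)) :
    |T| ≤ 2 * D := by
  rw [hT, abs_mul, abs_of_nonneg hE]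
  calc E * |x * P + y * Q| ≤ E * (|x| * |P| + |y| * |Q|) := by
        gcongr; exact (abs_add_le _ _).trans (by rw [abs_mul, abs_mul])
    _ ≤ E * (r * |P| + r * |Q|) := by gcongr
    _ ≤ _ := by linarith

lemma rhs_bound {r D x y X Y E a s : ℝ} (hr : 0 < r) (hE : 0 < E)
    (hx : |x| ≤ r) (hy : |y| ≤ r) (hs0 : 0 < s) (hs1 : s ≤ 1)
    (hX : E * r * |X| ≤ D * s) (hY : E * r * |Y| ≤ D * s) (ha : E * |a| ≤ D * s) :
    |((X + a * y / r ^ 2) ^ 2 + (Y - a * x / r ^ 2) ^ 2) * (E * E)| ≤ 8 * D ^ 2 * s / r ^ 2 := by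
  have key : ∀ X y : ℝ, E * r * |X| ≤ D * s → |y| ≤ r →
      (E * r * (X + a * y / r ^ 2)) ^ 2 ≤ (2 * (D * s)) ^ 2 := by
    intro X y hX hy
    have h1 : |E * r * (X + a * y / r ^ 2)| ≤ 2 * (D * s) := by
      have : E * r * (X + a * y / r ^ 2) = E * r * X + E * a * (y / r) := by
        field_simp
      rw [this]
      have h2 : |E * r * X| ≤ D * s := by
        rw [abs_mul, abs_mul, abs_of_pos hE, abs_of_pos hr]; exact hX
      have h3 : |E * a * (y / r)| ≤ D * s := by
        rw [abs_mul, abs_mul, abs_of_pos hE, abs_div, abs_of_pos hr]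
        have : |y| / r ≤ 1 := (div_le_one hr).2 hy
        calc E * |a| * (|y| / r) ≤ E * |a| * 1 := by gcongr
          _ ≤ _ := by linarith
      linarith [abs_add_le (E * r * X) (E * a * (y / r))]
    exact sq_le_sq' (by linarith [(abs_le.1 h1).1]) (abs_le.1 h1).2
  have k1 := key X y hX hy
  have k2 := key Y (-x) hY (by simpa using hx)
  rw [abs_of_nonneg (by positivity), le_div_iff₀ (by positivity)]
  have e : ((X + a * y / r ^ 2) ^ 2 + (Y - a * x / r ^ 2) ^ 2) * (E * E) * r ^ 2
      = (E * r * (X + a * y / r ^ 2)) ^ 2 + (E * r * (Y + a * (-x) / r ^ 2)) ^ 2 := by ring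
  rw [e]
  have : s ^ 2 ≤ s := by nlinarith
  nlinarith [mul_le_mul_of_nonneg_left this (sq_nonneg D)]

lemma key (a : ℝ) (h u : ℂ → ℝ)
    (hu : ContDiffOn ℝ 2 u PDisc)
    (hpde : ∀ z ∈ PDisc, lap u z
      = ((pdx h z + a * z.im / ‖z‖ ^ 2) ^ 2 + (pdy h z - a * z.re / ‖z‖ ^ 2) ^ 2)
        * Real.exp (2 * u z))
    (N : ℤ) (G : ℂ → ℂ)
    (hGhol : DifferentiableOn ℂ G (Metric.ball (0 : ℂ) 1))
    (hord : ∀ z ∈ PDisc, (pdx h z : ℂ) - (pdy h z : ℂ) * Complex.I = z ^ N * G z)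
    (n : ℤ) (hn : n = if a = 0 then N else min (-1) N)
    (β : ℝ) (hβ : β < (n : ℝ) + 1) (c : ℝ)
    (hconical : Tendsto (fun z => u z + β * Real.log ‖z‖) (𝓝[PDisc] 0) (𝓝 c)) :
    ∃ ε > (0 : ℝ), ∃ C : ℝ, ∀ᶠ z in 𝓝[PDisc] (0 : ℂ),
      |Real.exp (u z) * (‖z‖ * pdr h z)| ≤ C * ‖z‖ ^ ε ∧
      |Real.exp (u z) * (pdθ h z - a)| ≤ C * ‖z‖ ^ ε ∧
      |‖z‖ * pdr u z + β| ≤ C * ‖z‖ ^ ε ∧ |pdθ u z| ≤ C * ‖z‖ ^ ε := by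
  set ε := min ((n : ℝ) + 1 - β) (1 / 2) with hεdef
  have hε : 0 < ε := lt_min (by linarith) (by norm_num)
  have hε1 : ε < 1 := (min_le_right _ _).trans_lt (by norm_num)
  have hεn : ε ≤ (n : ℝ) + 1 - β := min_le_left _ _
  classical
  set w : ℂ → ℝ := fun z => if z = 0 then 0 else u z + β * Real.log ‖z‖ - c with hw
  have hw0 : w 0 = 0 := by simp [hw]
  have hwz : ∀ z : ℂ, z ≠ 0 → w z = u z + β * Real.log ‖z‖ - c := fun z hz => by simp [hw, hz]
  have hwc : ContinuousAt w 0 := by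
    rw [Metric.continuousAt_iff]
    intro e he
    obtain ⟨d, hd, hd2⟩ := Metric.tendsto_nhdsWithin_nhds.1 hconical e he
    refine ⟨min d 1, by positivity, fun z hz => ?_⟩
    rw [hw0]
    by_cases hz0 : z = 0
    · rw [hz0, hw0]; simpa using he
    · rw [lt_min_iff] at hz
      have := hd2 (x := z) ⟨norm_pos_iff.2 hz0, by simpa using hz.2⟩ hz.1
      rw [hwz z hz0]
      simpa [Real.dist_eq] using this
  -- radius
  have hGc : ContinuousAt G 0 :=
    ((hGhol 0 (by simp)).differentiableAt (Metric.isOpen_ball.mem_nhds (by simp))).continuousAt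
  obtain ⟨d1, hd1, hd1'⟩ := Metric.continuousAt_iff.1 hwc 1 one_pos
  obtain ⟨d2, hd2, hd2'⟩ := Metric.continuousAt_iff.1 hGc 1 one_pos
  set R := min (min d1 d2) 1 with hR
  have hR0 : 0 < R := by positivity
  have hR1 : R ≤ 1 := min_le_right _ _
  have hM : ∀ z : ℂ, ‖z‖ < R → |w z| ≤ 1 := by
    intro z hz
    have := hd1' (x := z) (by
      rw [dist_zero_right]; exact hz.trans_le ((min_le_left _ _).trans (min_le_left _ _)))
    rw [hw0, dist_zero_right] at this
    exact this.le
  set CG := ‖G 0‖ + 1 with hCGd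
  have hCG : 0 ≤ CG := by positivity
  have hG : ∀ z : ℂ, ‖z‖ < R → ‖G z‖ ≤ CG := by
    intro z hz
    have := hd2' (x := z) (by
      rw [dist_zero_right]; exact hz.trans_le ((min_le_left _ _).trans (min_le_right _ _)))
    rw [dist_eq_norm] at this
    have h3 : ‖G z‖ ≤ ‖G z - G 0‖ + ‖G 0‖ := by simpa using norm_add_le (G z - G 0) (G 0)
    linarith
  have hin : ∀ z : ℂ, 0 < ‖z‖ → ‖z‖ < R → z ∈ PDisc := fun z h1 h2 => ⟨h1, h2.trans_le hR1⟩
  set D := Real.exp (1 + c) * (CG + |a|) + 1 with hD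
  have hD0 : 0 < D := by positivity
  have hco : ∀ z : ℂ, 0 < ‖z‖ → ‖z‖ < R →
      Real.exp (u z) * ‖z‖ * |pdx h z| ≤ D * ‖z‖ ^ ε ∧
      Real.exp (u z) * ‖z‖ * |pdy h z| ≤ D * ‖z‖ ^ ε ∧
      Real.exp (u z) * |a| ≤ D * ‖z‖ ^ ε := by
    intro z hz hzR
    have ho := hord z (hin z hz hzR)
    have hnorm : ‖(z ^ N * G z)‖ ≤ ‖z‖ ^ N * CG := by
      rw [norm_mul, norm_zpow]
      exact mul_le_mul_of_nonneg_left (hG z hzR) (by positivity)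
    have hX : |pdx h z| ≤ ‖z‖ ^ N * CG := by
      have := Complex.abs_re_le_norm (z ^ N * G z)
      rw [← ho] at this hnorm
      refine le_trans ?_ (this.trans hnorm)
      simp
    have hY : |pdy h z| ≤ ‖z‖ ^ N * CG := by
      have := Complex.abs_im_le_norm (z ^ N * G z)
      rw [← ho] at this hnorm
      refine le_trans ?_ (this.trans hnorm)
      simp
    exact (coef_bounds (E := Real.exp (u z)) (c := c) (v := w z) hn hεn hz (hzR.trans_le hR1) hCG
      (by rw [hwz z (norm_pos_iff.1 hz)]; congr 1; ring) (hM z hzR) hX hY).2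
  have hre : ∀ z : ℂ, |z.re| ≤ ‖z‖ := Complex.abs_re_le_norm
  have him : ∀ z : ℂ, |z.im| ≤ ‖z‖ := Complex.abs_im_le_norm
  -- regularity of w
  have hev : ∀ z : ℂ, z ≠ 0 → w =ᶠ[𝓝 z] (u + β • (fun y : ℂ => Real.log ‖y‖)) + (fun _ => -c) := by
    intro z hz
    filter_upwards [isOpen_ne.mem_nhds hz] with y hy
    rw [hwz y hy]; simp; ring
  have hucd : ∀ z : ℂ, z ∈ PDisc → ContDiffAt ℝ 2 u z := fun z hz =>
    hu.contDiffAt (isOpen_PDisc.mem_nhds hz)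
  have h2 : ∀ z : ℂ, 0 < ‖z‖ → ‖z‖ < R →
      ContDiffAt ℝ 2 w z ∧ |(Δ w) z| ≤ 8 * D ^ 2 * ‖z‖ ^ (ε - 2) := by
    intro z hz hzR
    have hz0 := norm_pos_iff.1 hz
    have hc1 := hucd z (hin z hz hzR)
    obtain ⟨hl1, hl2⟩ := lap_log hz0
    have hl3 : ContDiffAt ℝ 2 (β • (fun y : ℂ => Real.log ‖y‖)) z := hl1.const_smul β
    have hl4 : ContDiffAt ℝ 2 (fun _ : ℂ => -c) z := contDiffAt_const
    have hl5 : ContDiffAt ℝ 2 (u + β • (fun y : ℂ => Real.log ‖y‖)) z := hc1.add hl3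
    refine ⟨((hc1.add hl3).add hl4).congr_of_eventuallyEq (hev z hz0), ?_⟩
    have hL : (Δ w) z = lap u z := by
      rw [(laplacian_congr_nhds (hev z hz0)).eq_of_nhds,
        hl5.laplacian_add hl4, hc1.laplacian_add hl3, laplacian_smul _ hl1, hl2, lap_eq hc1]
      simp [laplacian_const]
    rw [hL, hpde z (hin z hz hzR), two_mul (u z), Real.exp_add]
    obtain ⟨b1, b2, b3⟩ := hco z hz hzR
    have := rhs_bound (x := z.re) (y := z.im) (s := ‖z‖ ^ ε) hz (Real.exp_pos (u z)) (hre z) (him z)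
      (by positivity) (Real.rpow_le_one hz.le (hzR.trans_le hR1).le hε.le) b1 b2 b3
    refine this.trans (le_of_eq ?_)
    rw [Real.rpow_sub hz, Real.rpow_two]; ring
  obtain ⟨C, hC⟩ := core hR0 hR1 hε hε1 (by positivity) hM hwc hw0 h2
  refine ⟨ε, hε, 3 * D + 2 * |C|, ?_⟩
  have hnear : ∀ᶠ z in 𝓝[PDisc] (0 : ℂ), ‖z‖ < R / 8 := by
    apply mem_nhdsWithin_of_mem_nhds
    filter_upwards [Metric.ball_mem_nhds (0 : ℂ) (show 0 < R / 8 by positivity)] with z hz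
    simpa using hz
  filter_upwards [hnear, self_mem_nhdsWithin] with z hzR8 hzP
  have hz := hzP.1
  have hz0 := norm_pos_iff.1 hz
  have hzR : ‖z‖ < R := by linarith
  obtain ⟨b1, b2, b3⟩ := hco z hz hzR
  have hs : 0 < ‖z‖ ^ ε := by positivity
  have hCC : ∀ c : Circle, ‖z‖ * fderiv ℝ w z (c * I) ≤ |C| * ‖z‖ ^ ε := fun c =>
    (hC z hz hzR8.le c).trans (by gcongr; exact le_abs_self C)
  have hwd : DifferentiableAt ℝ w z := (h2 z hz hzR).1.differentiableAt (by norm_num)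
  have hpy : 1 * ‖z‖ * |pdy w z| ≤ |C| * ‖z‖ ^ ε := by
    rw [pdy_eq hwd, one_mul]
    have e1 := hCC 1
    have e2 := hCC (-1)
    simp at e1 e2
    rcases abs_cases (fderiv ℝ w z I) with ⟨e, _⟩ | ⟨e, _⟩ <;> rw [e] <;> linarith
  have hpx : 1 * ‖z‖ * |pdx w z| ≤ |C| * ‖z‖ ^ ε := by
    rw [pdx_eq hwd, one_mul]
    have e1 := hCC ⟨I, by simp [Submonoid.unitSphere]⟩
    have e2 := hCC ⟨-I, by simp [Submonoid.unitSphere]⟩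
    simp at e1 e2
    rcases abs_cases (fderiv ℝ w z 1) with ⟨e, _⟩ | ⟨e, _⟩ <;> rw [e] <;> linarith
  have hc1 := hucd z hzP
  have hud : DifferentiableAt ℝ u z := hc1.differentiableAt (by norm_num)
  obtain ⟨hl1, -⟩ := lap_log hz0
  have hld : DifferentiableAt ℝ (fun y : ℂ => Real.log ‖y‖) z := hl1.differentiableAt (by norm_num)
  obtain ⟨p1, p2⟩ := pd_log hz0
  rw [pdx_eq hld] at p1
  rw [pdy_eq hld] at p2
  have hfd : fderiv ℝ w z = fderiv ℝ u z + β • fderiv ℝ (fun y : ℂ => Real.log ‖y‖) z := by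
    rw [(hev z hz0).fderiv_eq]
    have := ((hud.hasFDerivAt.add (hld.hasFDerivAt.const_smul β)).add
      (hasFDerivAt_const (-c) z)).fderiv
    rw [this, add_zero]
  have q1 : pdx w z = pdx u z + β * (z.re / ‖z‖ ^ 2) := by
    rw [pdx_eq hwd, pdx_eq hud, hfd, ← p1]; simp
  have q2 : pdy w z = pdy u z + β * (z.im / ‖z‖ ^ 2) := by
    rw [pdy_eq hwd, pdy_eq hud, hfd, ← p2]; simp
  have hsq := sqnorm z
  have hne : ‖z‖ ≠ 0 := hz.ne'
  have r1 : |Real.exp (u z) * (‖z‖ * pdr h z)| ≤ 2 * (D * ‖z‖ ^ ε) :=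
    abs_lin (Real.exp_pos _).le (hre z) (him z) b1 b2 (by rw [pdr]; field_simp)
  have r2 : |Real.exp (u z) * pdθ h z| ≤ 2 * (D * ‖z‖ ^ ε) :=
    abs_lin (x := -z.im) (Real.exp_pos _).le (by simpa using him z) (hre z) b1 b2 (by rw [pdθ])
  have r3 : |‖z‖ * pdr u z + β| ≤ 2 * (|C| * ‖z‖ ^ ε) := by
    refine abs_lin (E := 1) zero_le_one (hre z) (him z) hpx hpy ?_
    have e : ‖z‖ * pdr u z = z.re * pdx u z + z.im * pdy u z := by rw [pdr]; field_simp
    have e2 : z.re * (β * (z.re / ‖z‖ ^ 2)) + z.im * (β * (z.im / ‖z‖ ^ 2)) = β := by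
      have : z.re * (β * (z.re / ‖z‖ ^ 2)) + z.im * (β * (z.im / ‖z‖ ^ 2))
        = β * ((z.re ^ 2 + z.im ^ 2) / ‖z‖ ^ 2) := by ring
      rw [this, ← hsq, div_self (by positivity), mul_one]
    rw [e, q1, q2]; linarith
  have r4 : |pdθ u z| ≤ 2 * (|C| * ‖z‖ ^ ε) := by
    refine abs_lin (E := 1) (x := -z.im) zero_le_one (by simpa using him z) (hre z) hpx hpy ?_
    rw [q1, q2, pdθ]; ring
  have nD : 0 ≤ D * ‖z‖ ^ ε := by positivity
  have nC : 0 ≤ |C| * ‖z‖ ^ ε := by positivity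
  refine ⟨by linarith, ?_, by linarith, by linarith⟩
  have : |Real.exp (u z) * (pdθ h z - a)| ≤ |Real.exp (u z) * pdθ h z| + Real.exp (u z) * |a| := by
    rw [mul_sub]
    refine (abs_sub _ _).trans ?_
    rw [abs_mul _ a, abs_of_pos (Real.exp_pos _)]
  linarith

lemma tend_of_bound {f : ℂ → ℝ} {C ε l : ℝ} (hε : 0 < ε)
    (hf : ∀ᶠ z in 𝓝[PDisc] (0 : ℂ), |f z - l| ≤ C * ‖z‖ ^ ε) :
    Tendsto f (𝓝[PDisc] 0) (𝓝 l) := by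
  rw [tendsto_iff_norm_sub_tendsto_zero]
  have h0 : Tendsto (fun z : ℂ => C * ‖z‖ ^ ε) (𝓝[PDisc] 0) (𝓝 0) := by
    have : ContinuousAt (fun z : ℂ => C * ‖z‖ ^ ε) 0 :=
      continuousAt_const.mul (continuous_norm.continuousAt.rpow_const (Or.inr hε.le))
    have h1 := this.tendsto
    simp only [norm_zero, Real.zero_rpow hε.ne', mul_zero] at h1
    exact h1.mono_left nhdsWithin_le_nhds
  exact squeeze_zero' (Eventually.of_forall fun _ => norm_nonneg _) hf h0

lemma tend_of_bound2 {f : ℂ → ℝ} {C ε l : ℝ} (hε : 0 < ε)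
    (hf : ∀ᶠ z in 𝓝[PDisc] (0 : ℂ), |f z - l| ≤ C * ‖z‖ ^ ε) :
    Tendsto (fun z => ‖z‖ ^ (-(ε / 2)) * (f z - l)) (𝓝[PDisc] 0) (𝓝 0) := by
  apply tend_of_bound (C := C) (half_pos hε)
  filter_upwards [hf, self_mem_nhdsWithin] with z hz hzP
  have hp := hzP.1
  rw [sub_zero, abs_mul, abs_of_pos (by positivity)]
  calc ‖z‖ ^ (-(ε / 2)) * |f z - l| ≤ ‖z‖ ^ (-(ε / 2)) * (C * ‖z‖ ^ ε) := by gcongr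
    _ = C * (‖z‖ ^ (-(ε / 2)) * ‖z‖ ^ ε) := by ring
    _ = _ := by rw [← Real.rpow_add hp]; congr 2; ring

end S12

theorem stmt12 (a : ℝ) (h u : ℂ → ℝ)
    (hh : ContDiffOn ℝ 2 h PDisc) (hu : ContDiffOn ℝ 2 u PDisc)
    (hharm : ∀ z ∈ PDisc, lap h z = 0)
    (hpde : ∀ z ∈ PDisc, lap u z
      = ((pdx h z + a * z.im / ‖z‖ ^ 2) ^ 2 + (pdy h z - a * z.re / ‖z‖ ^ 2) ^ 2)
        * Real.exp (2 * u z))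
    (N : ℤ) (G : ℂ → ℂ)
    (hGhol : DifferentiableOn ℂ G (Metric.ball (0 : ℂ) 1)) (hG0 : G 0 ≠ 0)
    (hord : ∀ z ∈ PDisc, (pdx h z : ℂ) - (pdy h z : ℂ) * Complex.I = z ^ N * G z)
    (n : ℤ) (hn : n = if a = 0 then N else min (-1) N)
    (β : ℝ) (hβ : β < (n : ℝ) + 1) (c : ℝ)
    (hconical : Tendsto (fun z => u z + β * Real.log ‖z‖) (𝓝[PDisc] 0) (𝓝 c)) :
    (∀ i j : Fin 2,
      Tendsto (fun z => Mθ h u a z i j) (𝓝[PDisc] 0)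
        (𝓝 (((β / 2) • (!![0, -1; 1, 0] : Matrix (Fin 2) (Fin 2) ℝ)) i j))) ∧
    ∃ ε > (0 : ℝ), ∀ i j : Fin 2,
      Tendsto
        (fun z => ‖z‖ ^ (-ε) *
          (‖z‖ * Mr h u a z i j - ((β / 2) • (1 : Matrix (Fin 2) (Fin 2) ℝ)) i j))
        (𝓝[PDisc] 0) (𝓝 0) := by
  obtain ⟨ε, hε, C, hC⟩ := S12.key a h u hu hpde N G hGhol hord n hn β hβ c hconical
  refine ⟨fun i j => ?_, ε / 2, half_pos hε, fun i j => ?_⟩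
  · apply S12.tend_of_bound (C := C) hε
    filter_upwards [hC] with z ⟨h1, h2, h3, h4⟩
    rw [abs_le] at h1 h2 h3 h4 ⊢
    fin_cases i <;> fin_cases j <;>
      simp [Mθ, ω11r, ω11θ, ω22r, ω22θ] <;> constructor <;> linarith
  · apply S12.tend_of_bound2 (C := C) hε
    filter_upwards [hC, self_mem_nhdsWithin] with z ⟨h1, h2, h3, h4⟩ hzP
    have hne : ‖z‖ ≠ 0 := hzP.1.ne'
    rw [abs_le] at h1 h2 h3 h4 ⊢
    fin_cases i <;> fin_cases j <;>
      simp [Mr, ω11r, ω11θ, ω22r, ω22θ, mul_div_cancel₀, hne] <;> constructor <;> linarith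
end

section
/- Let a ∈ ℝ and let h, u be real C² functions on the punctured unit disc B₁* such that Δh = 0 and Δu = ((∂h/∂x + a·y/|z|²)² + (∂h/∂y − a·x/|z|²)²)·e^{2u}. Assume the holomorphic function F(z) := ∂h/∂x − i·∂h/∂y has finite order N at 0, set n := N if a = 0 and n := min(−1, N) if a ≠ 0, and assume that u(z) + (n+1)·log|z| + log|log|z|| converges to a finite limit as z → 0. Let M_θ and M_r be the matrix components of the connection form ω_∇ determined by (h,u,a). Then there exists b ∈ ℂ with |b| = 1 such that, uniformly in θ as r → 0 (with ρ = log r): M_θ(re^{iθ}) = (1/2)·((n+1)·[[0,−1],[1,0]] + ρ^{-1}·[[Im(b e^{i(n+1)θ}), −1+Re(b e^{i(n+1)θ})],[1+Re(b e^{i(n+1)θ}), −Im(b e^{i(n+1)θ})]]) + o(ρ^{-1}), and r·M_r(re^{iθ}) = (1/2)·((n+1)·𝟙 + ρ^{-1}·[[1−Re(b e^{i(n+1)θ}), Im(b e^{i(n+1)θ})],[Im(b e^{i(n+1)θ}), 1+Re(b e^{i(n+1)θ})]]) + o(ρ^{-1}). -/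
open Complex Real Set Topology Filter Matrix

/-- The model `dθ`-component for a logarithmic singularity of order `(n+1)/2` with constant `b`. -/
noncomputable def logModelθ (n : ℤ) (b : ℂ) (r θ : ℝ) : Matrix (Fin 2) (Fin 2) ℝ :=
  (1 / 2 : ℝ) •
    (((n : ℝ) + 1) • (!![0, -1; 1, 0] : Matrix (Fin 2) (Fin 2) ℝ)
      + (Real.log r)⁻¹ •
        !![(b * Complex.exp ((((n : ℝ) + 1) * θ : ℝ) * Complex.I)).im,
            -1 + (b * Complex.exp ((((n : ℝ) + 1) * θ : ℝ) * Complex.I)).re;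
            1 + (b * Complex.exp ((((n : ℝ) + 1) * θ : ℝ) * Complex.I)).re,
            -(b * Complex.exp ((((n : ℝ) + 1) * θ : ℝ) * Complex.I)).im])

/-- The model for `r·M_r` for a logarithmic singularity of order `(n+1)/2` with constant `b`. -/
noncomputable def logModelr (n : ℤ) (b : ℂ) (r θ : ℝ) : Matrix (Fin 2) (Fin 2) ℝ :=
  (1 / 2 : ℝ) •
    (((n : ℝ) + 1) • (1 : Matrix (Fin 2) (Fin 2) ℝ)
      + (Real.log r)⁻¹ •
        !![1 - (b * Complex.exp ((((n : ℝ) + 1) * θ : ℝ) * Complex.I)).re,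
            (b * Complex.exp ((((n : ℝ) + 1) * θ : ℝ) * Complex.I)).im;
            (b * Complex.exp ((((n : ℝ) + 1) * θ : ℝ) * Complex.I)).im,
            1 + (b * Complex.exp ((((n : ℝ) + 1) * θ : ℝ) * Complex.I)).re])


/-- `W` has pure second partial derivatives at `(x, y)` with sum `L`. -/
def LapAt (W : ℝ → ℝ → ℝ) (L : ℝ) (x y : ℝ) : Prop :=
  ∃ (p q : ℝ → ℝ) (a b : ℝ), (∀ᶠ s in 𝓝 x, HasDerivAt (fun t => W t y) (p s) s) ∧
    HasDerivAt p a x ∧ (∀ᶠ s in 𝓝 y, HasDerivAt (fun t => W x t) (q s) s) ∧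
    HasDerivAt q b y ∧ a + b = L

lemma LapAt.add {W W' : ℝ → ℝ → ℝ} {L L' x y : ℝ} (h : LapAt W L x y) (h' : LapAt W' L' x y) :
    LapAt (fun x y => W x y + W' x y) (L + L') x y := by
  obtain ⟨p, q, a, b, h1, h2, h3, h4, h5⟩ := h
  obtain ⟨p', q', a', b', h1', h2', h3', h4', h5'⟩ := h'
  refine ⟨fun s => p s + p' s, fun s => q s + q' s, a + a', b + b', ?_, h2.add h2', ?_,
    h4.add h4', by linarith⟩
  · filter_upwards [h1, h1'] with s hs hs' using hs.add hs'
  · filter_upwards [h3, h3'] with s hs hs' using hs.add hs'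

lemma LapAt.smul {W : ℝ → ℝ → ℝ} {L x y : ℝ} (k : ℝ) (h : LapAt W L x y) :
    LapAt (fun x y => k * W x y) (k * L) x y := by
  obtain ⟨p, q, a, b, h1, h2, h3, h4, h5⟩ := h
  refine ⟨fun s => k * p s, fun s => k * q s, k * a, k * b, ?_, h2.const_mul k, ?_,
    h4.const_mul k, by rw [← h5]; ring⟩
  · filter_upwards [h1] with s hs using hs.const_mul k
  · filter_upwards [h3] with s hs using hs.const_mul k

lemma LapAt.shift {W : ℝ → ℝ → ℝ} {L x y : ℝ} (x0 y0 : ℝ) (h : LapAt W L (x0 + x) (y0 + y)) :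
    LapAt (fun x y => W (x0 + x) (y0 + y)) L x y := by
  obtain ⟨p, q, a, b, h1, h2, h3, h4, h5⟩ := h
  have cx : Tendsto (fun s : ℝ => x0 + s) (𝓝 x) (𝓝 (x0 + x)) := by
    apply Continuous.tendsto; fun_prop
  have cy : Tendsto (fun s : ℝ => y0 + s) (𝓝 y) (𝓝 (y0 + y)) := by
    apply Continuous.tendsto; fun_prop
  refine ⟨fun s => p (x0 + s), fun s => q (y0 + s), a, b, ?_, h2.comp_const_add x0 x, ?_,
    h4.comp_const_add y0 y, h5⟩
  · filter_upwards [cx.eventually h1] with s hs using hs.comp_const_add x0 s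
  · filter_upwards [cy.eventually h3] with s hs using hs.comp_const_add y0 s

lemma LapAt.swap {W : ℝ → ℝ → ℝ} {L x y : ℝ} (h : LapAt W L y x) :
    LapAt (fun x y => W y x) L x y := by
  obtain ⟨p, q, a, b, h1, h2, h3, h4, h5⟩ := h
  exact ⟨q, p, b, a, h3, h4, h1, h2, by linarith⟩

lemma LapAt.refl {W : ℝ → ℝ → ℝ} {L x y : ℝ} (h : LapAt W L x (-y)) :
    LapAt (fun x y => W x (-y)) L x y := by
  obtain ⟨p, q, a, b, h1, h2, h3, h4, h5⟩ := h
  have cy : Tendsto (fun s : ℝ => -s) (𝓝 y) (𝓝 (-y)) := by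
    apply Continuous.tendsto; fun_prop
  refine ⟨p, fun s => -q (-s), a, b, h1, h2, ?_, ?_, h5⟩
  · filter_upwards [cy.eventually h3] with s hs
    have := hs.comp s (hasDerivAt_neg s)
    simpa [Function.comp_def] using this
  · have := (h4.comp y (hasDerivAt_neg y)).fun_neg
    simpa [Function.comp_def] using this

lemma LapAt.sep {f g f' g' : ℝ → ℝ} {a b x y : ℝ} (hf : ∀ᶠ s in 𝓝 x, HasDerivAt f (f' s) s)
    (hf' : HasDerivAt f' a x) (hg : ∀ᶠ s in 𝓝 y, HasDerivAt g (g' s) s)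
    (hg' : HasDerivAt g' b y) : LapAt (fun x y => f x + g y) (a + b) x y := by
  refine ⟨f', g', a, b, ?_, hf', ?_, hg', rfl⟩
  · filter_upwards [hf] with s hs using hs.add_const _
  · filter_upwards [hg] with s hs using hs.const_add _

/-- quadratic polynomial -/
lemma LapAt.quad (A B C D E x y : ℝ) :
    LapAt (fun x y => (A * x ^ 2 + B * x) + (C * y ^ 2 + D * y + E)) (2 * A + 2 * C) x y := by
  have key : ∀ A B E s : ℝ, HasDerivAt (fun s : ℝ => A * s ^ 2 + B * s + E) (2 * A * s + B) s := by
    intro A B E s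
    have := (((hasDerivAt_pow 2 s).const_mul A).add ((hasDerivAt_id s).const_mul B)).add_const E
    refine this.congr_deriv ?_
    simp; ring
  have key2 : ∀ A B s : ℝ, HasDerivAt (fun s : ℝ => 2 * A * s + B) (2 * A) s := by
    intro A B s
    have := (((hasDerivAt_id s).const_mul (2 * A))).add_const B
    refine this.congr_deriv ?_
    simp
  refine LapAt.sep (f' := fun s => 2 * A * s + B) (g' := fun s => 2 * C * s + D)
    (Eventually.of_forall fun s => ?_) (key2 A B x)
    (Eventually.of_forall fun s => key C D E s) (key2 C D y)
  simpa using key A B 0 s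

lemma second_le {f p : ℝ → ℝ} {a x : ℝ} (h1 : ∀ᶠ s in 𝓝 x, HasDerivAt f (p s) s)
    (h2 : HasDerivAt p a x) (hm : IsLocalMax f x) : a ≤ 0 := by
  by_contra! ha
  have e : deriv f =ᶠ[𝓝 x] p := by
    filter_upwards [h1] with s hs using hs.deriv
  have hd : deriv (deriv f) x = a := by rw [e.deriv_eq]; exact h2.deriv
  have hmin : IsLocalMin f x := isLocalMin_of_deriv_deriv_pos (by rw [hd]; exact ha)
    hm.deriv_eq_zero h1.self_of_nhds.continuousAt
  have hconst : f =ᶠ[𝓝 x] fun _ => f x := by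
    filter_upwards [hm, hmin] with s hs hs' using le_antisymm hs hs'
  have h3 : deriv f =ᶠ[𝓝 x] fun _ => 0 := by
    have := hconst.deriv
    simpa using this
  have : deriv (deriv f) x = 0 := by rw [h3.deriv_eq]; simp
  linarith

lemma maxp {x1 x2 y1 y2 : ℝ} {g : ℝ → ℝ → ℝ} {B : ℝ}
    (hc : ContinuousOn (fun P : ℝ × ℝ => g P.1 P.2) (Icc x1 x2 ×ˢ Icc y1 y2))
    (hL : ∀ x ∈ Ioo x1 x2, ∀ y ∈ Ioo y1 y2, ∃ L > 0, LapAt g L x y)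
    (hb : ∀ x ∈ Icc x1 x2, ∀ y ∈ Icc y1 y2, (x = x1 ∨ x = x2 ∨ y = y1 ∨ y = y2) → g x y ≤ B) :
    ∀ x ∈ Icc x1 x2, ∀ y ∈ Icc y1 y2, g x y ≤ B := by
  intro x hx y hy
  obtain ⟨P, hP, hmax⟩ := (isCompact_Icc.prod isCompact_Icc).exists_isMaxOn
    ⟨(x, y), ⟨hx, hy⟩⟩ hc
  obtain ⟨s, t⟩ := P
  have hs : s ∈ Icc x1 x2 := hP.1
  have ht : t ∈ Icc y1 y2 := hP.2
  have hm : ∀ x' ∈ Icc x1 x2, ∀ y' ∈ Icc y1 y2, g x' y' ≤ g s t := fun x' hx' y' hy' =>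
    hmax (a := (x', y')) ⟨hx', hy'⟩
  refine (hm x hx y hy).trans ?_
  by_cases hbd : s = x1 ∨ s = x2 ∨ t = y1 ∨ t = y2
  · exact hb s hs t ht hbd
  · exfalso
    push Not at hbd
    obtain ⟨n1, n2, n3, n4⟩ := hbd
    have hs' : s ∈ Ioo x1 x2 := ⟨lt_of_le_of_ne hs.1 n1.symm, lt_of_le_of_ne hs.2 n2⟩
    have ht' : t ∈ Ioo y1 y2 := ⟨lt_of_le_of_ne ht.1 n3.symm, lt_of_le_of_ne ht.2 n4⟩
    obtain ⟨L, hLpos, p, q, a, b, h1, h2, h3, h4, h5⟩ := hL s hs' t ht'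
    have ha := second_le h1 h2 (by
      filter_upwards [Icc_mem_nhds hs'.1 hs'.2] with s' hs'' using hm s' hs'' t ht)
    have hb := second_le h3 h4 (by
      filter_upwards [Icc_mem_nhds ht'.1 ht'.2] with s' hs'' using hm s hs s' hs'')
    linarith

lemma grad_aux {d M N q : ℝ} (hd : 0 < d) {W : ℝ → ℝ → ℝ}
    (hc : ContinuousOn (fun P : ℝ × ℝ => W P.1 P.2) (Icc (-d) d ×ˢ Icc (-d) d))
    (hL : ∀ x ∈ Icc (-d) d, ∀ y ∈ Icc (-d) d, ∃ L, |L| < N ∧ LapAt W L x y)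
    (hM : ∀ x ∈ Icc (-d) d, ∀ y ∈ Icc (-d) d, |W x y| ≤ M)
    (hq : HasDerivAt (fun t => W 0 t) q 0) : q ≤ 2 * M / d + d * N / 2 := by
  have hM0 : 0 ≤ M := (abs_nonneg _).trans (hM 0 ⟨by linarith, by linarith⟩ 0 ⟨by linarith, by linarith⟩)
  have hN0 : 0 < N := by
    obtain ⟨L, h1, -⟩ := hL 0 ⟨by linarith, by linarith⟩ 0 ⟨by linarith, by linarith⟩
    exact (abs_nonneg _).trans_lt h1
  set A := M / d ^ 2 with hA
  have hA0 : 0 ≤ A := by positivity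
  have hAd : A * d ^ 2 = M := by rw [hA]; field_simp
  have main := maxp (x1 := -d) (x2 := d) (y1 := 0) (y2 := d) (B := 0)
    (g := fun x y => ((1/2) * W x y + (-1/2) * W x (-y)) +
      (((-A) * x ^ 2 + 0 * x) + ((A + N / 2) * y ^ 2 + (-(2 * A * d + N * d / 2)) * y + 0)))
    (by
      have h1 : ContinuousOn (fun P : ℝ × ℝ => W P.1 P.2) (Icc (-d) d ×ˢ Icc 0 d) :=
        hc.mono (prod_mono le_rfl (Icc_subset_Icc (by linarith) le_rfl))
      have h2 : ContinuousOn (fun P : ℝ × ℝ => W P.1 (-P.2)) (Icc (-d) d ×ˢ Icc 0 d) := by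
        have : ContinuousOn (fun P : ℝ × ℝ => ((P.1, -P.2) : ℝ × ℝ)) (Icc (-d) d ×ˢ Icc 0 d) := by
          fun_prop
        refine hc.comp this ?_
        rintro ⟨x, y⟩ ⟨hx, hy⟩
        refine ⟨hx, ?_⟩
        have h1 := hy.1; have h2 := hy.2
        simp only at h1 h2
        constructor <;> simp only <;> linarith
      exact ((h1.const_mul _).add (h2.const_mul _)).add (Continuous.continuousOn (by fun_prop)))
    (by
      rintro x ⟨hx1, hx2⟩ y ⟨hy1, hy2⟩
      obtain ⟨L, hL1, hL2⟩ := hL x ⟨by linarith, by linarith⟩ y ⟨by linarith, by linarith⟩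
      obtain ⟨L', hL1', hL2'⟩ := hL x ⟨by linarith, by linarith⟩ (-y) ⟨by linarith, by linarith⟩
      refine ⟨_, ?_, ((hL2.smul (1/2)).add (hL2'.refl.smul (-1/2))).add (LapAt.quad _ _ _ _ _ x y)⟩
      rw [abs_lt] at hL1 hL1'
      linarith)
    (by
      rintro x ⟨hx1, hx2⟩ y ⟨hy1, hy2⟩ hbd
      have b1 := abs_le.1 (hM x ⟨by linarith, by linarith⟩ y ⟨by linarith, by linarith⟩)
      have b2 := abs_le.1 (hM x ⟨by linarith, by linarith⟩ (-y) ⟨by linarith, by linarith⟩)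
      have t1 : 0 ≤ A * (y * (d - y)) := by
        have : 0 ≤ d - y := by linarith
        positivity
      have t2 : 0 ≤ N * (y * (d - y)) := by
        have : 0 ≤ d - y := by linarith
        positivity
      have t3 : 0 ≤ A * (y * d) := by positivity
      have t4 : 0 ≤ A * x ^ 2 := by positivity
      rcases hbd with rfl | rfl | rfl | rfl
      · nlinarith
      · nlinarith
      · simp only [neg_zero]; nlinarith
      · nlinarith)
  have hfin : ∀ y ∈ Ioo 0 d, W 0 y - W 0 (-y) ≤ 2 * (2 * M / d + d * N / 2) * y := by
    intro y hy
    have := main 0 ⟨by linarith, by linarith⟩ y ⟨hy.1.le, hy.2.le⟩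
    have e : 2 * M / d = 2 * A * d := by rw [hA]; field_simp
    rw [e]
    have t3 : 0 ≤ A * y ^ 2 := by positivity
    have t4 : 0 ≤ N * y ^ 2 := by positivity
    have t5 : 0 ≤ N * (d * y) := mul_nonneg hN0.le (mul_nonneg hd.le hy.1.le)
    nlinarith
  have hneg : HasDerivAt (fun t => W 0 (-t)) (-q) 0 := by
    have hq' : HasDerivAt (fun t => W 0 t) q (-0) := by simpa using hq
    have := hq'.comp 0 (hasDerivAt_neg 0)
    simpa [Function.comp_def] using this
  have hdiff := (hq.sub hneg)
  have hsl := (hasDerivWithinAt_iff_tendsto_slope' (s := Ioi (0:ℝ)) (by simp)).1 hdiff.hasDerivWithinAt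
  have := le_of_tendsto hsl (b := 2 * (2 * M / d + d * N / 2)) (by
    filter_upwards [Ioo_mem_nhdsGT hd] with y hy
    rw [slope_def_field]
    simp only [Pi.sub_apply, neg_zero, sub_self, sub_zero]
    rw [div_le_iff₀ hy.1]
    exact hfin y hy)
  linarith

lemma grad_y {x0 y0 d M N q : ℝ} (hd : 0 < d) {W : ℝ → ℝ → ℝ}
    (hc : ContinuousOn (fun P : ℝ × ℝ => W P.1 P.2) (Icc (x0 - d) (x0 + d) ×ˢ Icc (y0 - d) (y0 + d)))
    (hL : ∀ x ∈ Icc (x0 - d) (x0 + d), ∀ y ∈ Icc (y0 - d) (y0 + d), ∃ L, |L| < N ∧ LapAt W L x y)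
    (hM : ∀ x ∈ Icc (x0 - d) (x0 + d), ∀ y ∈ Icc (y0 - d) (y0 + d), |W x y| ≤ M)
    (hq : HasDerivAt (fun t => W x0 t) q y0) : |q| ≤ 2 * M / d + d * N / 2 := by
  have mem : ∀ x0 x : ℝ, x ∈ Icc (-d) d → x0 + x ∈ Icc (x0 - d) (x0 + d) := fun x0 x hx =>
    ⟨by linarith [hx.1], by linarith [hx.2]⟩
  have hc' : ContinuousOn (fun P : ℝ × ℝ => W (x0 + P.1) (y0 + P.2)) (Icc (-d) d ×ˢ Icc (-d) d) := by
    have : ContinuousOn (fun P : ℝ × ℝ => ((x0 + P.1, y0 + P.2) : ℝ × ℝ)) (Icc (-d) d ×ˢ Icc (-d) d) := by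
      fun_prop
    exact hc.comp this fun P hP => ⟨mem _ _ hP.1, mem _ _ hP.2⟩
  have hq' : HasDerivAt (fun t => W (x0 + 0) (y0 + t)) q 0 := by
    have : HasDerivAt (fun t => W x0 t) q (y0 + 0) := by simpa using hq
    simpa using this.comp_const_add y0 0
  rw [abs_le]
  constructor
  · have := grad_aux (M := M) (N := N) (q := -1 * q) hd (W := fun x y => -1 * W (x0 + x) (y0 + y))
      (hc'.const_mul (-1))
      (fun x hx y hy => by
        obtain ⟨L, h1, h2⟩ := hL _ (mem x0 x hx) _ (mem y0 y hy)
        exact ⟨-1 * L, by simpa using h1, (h2.shift).smul (-1)⟩)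
      (fun x hx y hy => by simpa using hM _ (mem x0 x hx) _ (mem y0 y hy))
      (hq'.const_mul (-1))
    linarith
  · exact grad_aux hd (W := fun x y => W (x0 + x) (y0 + y)) hc'
      (fun x hx y hy => by
        obtain ⟨L, h1, h2⟩ := hL _ (mem x0 x hx) _ (mem y0 y hy)
        exact ⟨L, h1, h2.shift⟩)
      (fun x hx y hy => hM _ (mem x0 x hx) _ (mem y0 y hy)) hq'

lemma grad_x {x0 y0 d M N q : ℝ} (hd : 0 < d) {W : ℝ → ℝ → ℝ}
    (hc : ContinuousOn (fun P : ℝ × ℝ => W P.1 P.2) (Icc (x0 - d) (x0 + d) ×ˢ Icc (y0 - d) (y0 + d)))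
    (hL : ∀ x ∈ Icc (x0 - d) (x0 + d), ∀ y ∈ Icc (y0 - d) (y0 + d), ∃ L, |L| < N ∧ LapAt W L x y)
    (hM : ∀ x ∈ Icc (x0 - d) (x0 + d), ∀ y ∈ Icc (y0 - d) (y0 + d), |W x y| ≤ M)
    (hq : HasDerivAt (fun t => W t y0) q x0) : |q| ≤ 2 * M / d + d * N / 2 := by
  refine grad_y (W := fun x y => W y x) (x0 := y0) (y0 := x0) hd ?_ ?_ ?_ hq
  · have : ContinuousOn (fun P : ℝ × ℝ => ((P.2, P.1) : ℝ × ℝ))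
      (Icc (y0 - d) (y0 + d) ×ˢ Icc (x0 - d) (x0 + d)) := by fun_prop
    exact hc.comp this fun P hP => ⟨hP.2, hP.1⟩
  · intro x hx y hy
    obtain ⟨L, h1, h2⟩ := hL y hy x hx
    exact ⟨L, h1, h2.swap⟩
  · exact fun x hx y hy => hM y hy x hx

lemma lap_small {x0 y0 d M l : ℝ} (hd : 0 < d) {W : ℝ → ℝ → ℝ} (hl : 0 < l)
    (hc : ContinuousOn (fun P : ℝ × ℝ => W P.1 P.2) (Icc (x0 - d) (x0 + d) ×ˢ Icc (y0 - d) (y0 + d)))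
    (hL : ∀ x ∈ Icc (x0 - d) (x0 + d), ∀ y ∈ Icc (y0 - d) (y0 + d), ∃ L, l ≤ L ∧ LapAt W L x y)
    (hM : ∀ x ∈ Icc (x0 - d) (x0 + d), ∀ y ∈ Icc (y0 - d) (y0 + d), |W x y| ≤ M) :
    l * d ^ 2 ≤ 16 * M := by
  have main := maxp (x1 := x0 - d) (x2 := x0 + d) (y1 := y0 - d) (y2 := y0 + d)
    (B := M - l / 8 * d ^ 2)
    (g := fun x y => W x y +
      (((-(l / 8)) * x ^ 2 + (l / 4 * x0) * x) +
        ((-(l / 8)) * y ^ 2 + (l / 4 * y0) * y + -(l / 8 * (x0 ^ 2 + y0 ^ 2)))))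
    (by fun_prop)
    (fun x hx y hy => by
      obtain ⟨L, h1, h2⟩ := hL x (Ioo_subset_Icc_self hx) y (Ioo_subset_Icc_self hy)
      exact ⟨_, by linarith, h2.add (LapAt.quad _ _ _ _ _ x y)⟩)
    (fun x hx y hy hbd => by
      have b1 := abs_le.1 (hM x hx y hy)
      have t1 : 0 ≤ l * (x - x0) ^ 2 := by positivity
      have t2 : 0 ≤ l * (y - y0) ^ 2 := by positivity
      rcases hbd with rfl | rfl | rfl | rfl <;> nlinarith)
    x0 ⟨by linarith, by linarith⟩ y0 ⟨by linarith, by linarith⟩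
  have b1 := abs_le.1 (hM x0 ⟨by linarith, by linarith⟩ y0 ⟨by linarith, by linarith⟩)
  nlinarith

lemma asymp_pos {V f : ℝ → ℝ → ℝ} {κ : ℝ} (hκ : 0 < κ)
    (hc : ContinuousOn (fun P : ℝ × ℝ => V P.1 P.2) (Iio 0 ×ˢ univ))
    (hL : ∀ ρ < 0, ∀ θ, LapAt V (f ρ θ / ρ ^ 2) ρ θ)
    (hV : ∀ ε > 0, ∃ R < 0, ∀ ρ < R, ∀ θ, |V ρ θ| ≤ ε)
    (hf : ∀ ε > 0, ∃ R < 0, ∀ ρ < R, ∀ θ, |f ρ θ - κ| ≤ ε) : False := by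
  obtain ⟨R1, h1, hV⟩ := hV (κ / 1000) (by positivity)
  obtain ⟨R2, h2, hf⟩ := hf (κ / 2) (by positivity)
  set ρ := 2 * (R1 + R2) with hρ
  have hρ0 : ρ < 0 := by linarith
  have hρne : ρ ≠ 0 := hρ0.ne
  have bd : ∀ x ∈ Icc (ρ - -ρ / 2) (ρ + -ρ / 2), x < R1 ∧ x < R2 := fun x hx => by
    have := hx.2
    constructor <;> linarith
  have := lap_small (x0 := ρ) (y0 := 0) (d := -ρ / 2) (M := κ / 1000)
    (l := 2 * κ / (9 * ρ ^ 2)) (W := V) (by linarith) (by positivity)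
    (hc.mono fun P hP => ⟨by have := bd _ hP.1; exact this.1.trans h1, mem_univ _⟩)
    (fun x hx y _ => ⟨_, by
      have hfx := abs_le.1 (hf x (bd x hx).2 y)
      have hx0 : x < 0 := (bd x hx).1.trans h1
      have hxne : x ≠ 0 := hx0.ne
      have := hx.1
      have hsq : x ^ 2 ≤ 9 / 4 * ρ ^ 2 := by nlinarith
      rw [div_le_div_iff₀ (by positivity) (by positivity)]
      have : κ / 2 ≤ f x y := by linarith
      calc 2 * κ * x ^ 2 ≤ 2 * κ * (9 / 4 * ρ ^ 2) := by gcongr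
        _ = κ / 2 * (9 * ρ ^ 2) := by ring
        _ ≤ _ := by gcongr, hL x ((bd x hx).1.trans h1) y⟩)
    (fun x hx y _ => hV x (bd x hx).1 y)
  have e : 2 * κ / (9 * ρ ^ 2) * (-ρ / 2) ^ 2 = κ / 18 := by
    have := hρ0.ne
    field_simp; norm_num
  linarith

lemma asymp0 {V f : ℝ → ℝ → ℝ} {κ : ℝ}
    (hc : ContinuousOn (fun P : ℝ × ℝ => V P.1 P.2) (Iio 0 ×ˢ univ))
    (hL : ∀ ρ < 0, ∀ θ, LapAt V (f ρ θ / ρ ^ 2) ρ θ)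
    (hV : ∀ ε > 0, ∃ R < 0, ∀ ρ < R, ∀ θ, |V ρ θ| ≤ ε)
    (hf : ∀ ε > 0, ∃ R < 0, ∀ ρ < R, ∀ θ, |f ρ θ - κ| ≤ ε) :
    κ = 0 ∧ ∀ ε > 0, ∃ R < 0, ∀ ρ < R, ∀ θ q,
      (HasDerivAt (fun t => V t θ) q ρ ∨ HasDerivAt (fun t => V ρ t) q θ) → |q| ≤ ε / |ρ| := by
  have hκ : κ = 0 := by
    rcases lt_trichotomy κ 0 with h | h | h
    · exfalso
      refine asymp_pos (V := fun x y => -1 * V x y) (f := fun x y => -1 * f x y) (κ := -κ)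
        (by linarith) (hc.const_mul (-1)) (fun ρ hρ θ => ?_) (by simpa using hV) ?_
      · have := (hL ρ hρ θ).smul (-1)
        rwa [← mul_div_assoc] at this
      · intro ε hε
        obtain ⟨R, hR, h⟩ := hf ε hε
        refine ⟨R, hR, fun ρ hρ θ => ?_⟩
        rw [← abs_neg]
        convert h ρ hρ θ using 2
        ring
    · exact h
    · exact (asymp_pos h hc hL hV hf).elim
  refine ⟨hκ, fun ε hε => ?_⟩
  subst hκ
  obtain ⟨R1, h1, hV⟩ := hV (ε / 8) (by positivity)
  obtain ⟨R2, h2, hf⟩ := hf (ε / 8) (by positivity)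
  refine ⟨2 * (R1 + R2), by linarith, fun ρ hρ θ q hq => ?_⟩
  have hρ0 : ρ < 0 := by linarith
  have hρne : ρ ≠ 0 := hρ0.ne
  have bd : ∀ x ∈ Icc (ρ - -ρ / 2) (ρ + -ρ / 2), x < R1 ∧ x < R2 := fun x hx => by
    have := hx.2
    constructor <;> linarith
  have hc' : ContinuousOn (fun P : ℝ × ℝ => V P.1 P.2)
      (Icc (ρ - -ρ / 2) (ρ + -ρ / 2) ×ˢ Icc (θ - -ρ / 2) (θ + -ρ / 2)) :=
    (hc.mono fun P hP => ⟨by have := bd _ hP.1; exact this.1.trans h1, mem_univ _⟩)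
  have hL' : ∀ x ∈ Icc (ρ - -ρ / 2) (ρ + -ρ / 2), ∀ y ∈ Icc (θ - -ρ / 2) (θ + -ρ / 2),
      ∃ L, |L| < ε / ρ ^ 2 ∧ LapAt V L x y := by
    intro x hx y _
    refine ⟨_, ?_, hL x ((bd x hx).1.trans h1) y⟩
    have hfx := (hf x (bd x hx).2 y)
    have hx0 : x < 0 := (bd x hx).1.trans h1
    have hxne : x ≠ 0 := hx0.ne
    have := hx.2
    have hsq : 1 / 4 * ρ ^ 2 ≤ x ^ 2 := by nlinarith
    have hx2 : 0 < x ^ 2 := by positivity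
    rw [sub_zero] at hfx
    rw [abs_div, abs_of_pos hx2, div_lt_div_iff₀ (by positivity) (by positivity)]
    calc |f x y| * ρ ^ 2 ≤ ε / 8 * (4 * x ^ 2) := by gcongr; linarith
      _ = ε / 2 * x ^ 2 := by ring
      _ < ε * x ^ 2 := by gcongr; linarith
  have hM : ∀ x ∈ Icc (ρ - -ρ / 2) (ρ + -ρ / 2), ∀ y ∈ Icc (θ - -ρ / 2) (θ + -ρ / 2),
      |V x y| ≤ ε / 8 := fun x hx y _ => hV x (bd x hx).1 y
  have key : |q| ≤ 2 * (ε / 8) / (-ρ / 2) + (-ρ / 2) * (ε / ρ ^ 2) / 2 := by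
    rcases hq with hq | hq
    · exact grad_x (by linarith) hc' hL' hM hq
    · exact grad_y (by linarith) hc' hL' hM hq
  refine key.trans ?_
  rw [abs_of_neg hρ0]
  have hp : 0 < -ρ := by linarith
  have e : 2 * (ε / 8) / (-ρ / 2) + (-ρ / 2) * (ε / ρ ^ 2) / 2 = (3 / 4) * (ε / -ρ) := by
    have := hρ0.ne
    field_simp; norm_num
  rw [e]
  have : 0 < ε / -ρ := by positivity
  linarith

lemma asymp {V f : ℝ → ℝ → ℝ} {κ c : ℝ}
    (hc : ContinuousOn (fun P : ℝ × ℝ => V P.1 P.2) (Iio 0 ×ˢ univ))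
    (hL : ∀ ρ < 0, ∀ θ, LapAt V (f ρ θ / ρ ^ 2) ρ θ)
    (hV : ∀ ε > 0, ∃ R < 0, ∀ ρ < R, ∀ θ, |V ρ θ - c| ≤ ε)
    (hf : ∀ ε > 0, ∃ R < 0, ∀ ρ < R, ∀ θ, |f ρ θ - κ| ≤ ε) :
    κ = 0 ∧ ∀ ε > 0, ∃ R < 0, ∀ ρ < R, ∀ θ q,
      (HasDerivAt (fun t => V t θ) q ρ ∨ HasDerivAt (fun t => V ρ t) q θ) → |q| ≤ ε / |ρ| := by
  obtain ⟨h1, h2⟩ := asymp0 (V := fun x y => V x y - c) (f := f) (κ := κ)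
    (hc.sub continuousOn_const) (fun ρ hρ θ => by
      have := (hL ρ hρ θ).add (LapAt.quad 0 0 0 0 (-c) ρ θ)
      simpa [sub_eq_add_neg] using this) hV hf
  refine ⟨h1, fun ε hε => ?_⟩
  obtain ⟨R, hR, h⟩ := h2 ε hε
  refine ⟨R, hR, fun ρ hρ θ q hq => h ρ hρ θ q ?_⟩
  exact hq.imp (fun h => h.sub_const c) (fun h => h.sub_const c)

/-- polar exponential -/
noncomputable def EE (ρ θ : ℝ) : ℂ := Complex.exp ((ρ : ℂ) + (θ : ℂ) * Complex.I)

lemma isOpen_PDisc : IsOpen PDisc :=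
  (isOpen_lt continuous_const continuous_norm).inter (isOpen_lt continuous_norm continuous_const)

lemma norm_EE (ρ θ : ℝ) : ‖EE ρ θ‖ = Real.exp ρ := by
  simp [EE, Complex.norm_exp]

lemma EE_mem {ρ : ℝ} (hρ : ρ < 0) (θ : ℝ) : EE ρ θ ∈ PDisc := by
  constructor
  · rw [norm_EE]; positivity
  · rw [norm_EE]; simpa using hρ

lemma pdx_eq {f : ℂ → ℝ} {z : ℂ} (hf : DifferentiableAt ℝ f z) : pdx f z = fderiv ℝ f z 1 := by
  have h1 : HasDerivAt (fun t : ℝ => z + (t : ℂ)) 1 0 := by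
    simpa using (Complex.ofRealCLM.hasDerivAt (x := (0:ℝ))).const_add z
  have hf' : HasFDerivAt f (fderiv ℝ f z) (z + ((0 : ℝ) : ℂ)) := by simpa using hf.hasFDerivAt
  exact (hf'.comp_hasDerivAt (0 : ℝ) h1).deriv

lemma pdy_eq {f : ℂ → ℝ} {z : ℂ} (hf : DifferentiableAt ℝ f z) :
    pdy f z = fderiv ℝ f z Complex.I := by
  have h1 : HasDerivAt (fun t : ℝ => z + (t : ℂ) * Complex.I) Complex.I 0 := by
    simpa using ((Complex.ofRealCLM.hasDerivAt (x := (0:ℝ))).mul_const Complex.I).const_add z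
  have hf' : HasFDerivAt f (fderiv ℝ f z) (z + ((0 : ℝ) : ℂ) * Complex.I) := by
    simpa using hf.hasFDerivAt
  exact (hf'.comp_hasDerivAt (0 : ℝ) h1).deriv

lemma EE_dρ (ρ θ : ℝ) : HasDerivAt (fun t : ℝ => EE t θ) (EE ρ θ) ρ := by
  have h := ((Complex.ofRealCLM.hasDerivAt (x := ρ)).add_const ((θ : ℂ) * Complex.I)).cexp
  simpa [EE] using h

lemma EE_dθ (ρ θ : ℝ) : HasDerivAt (fun t : ℝ => EE ρ t) (EE ρ θ * Complex.I) θ := by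
  have h := (((Complex.ofRealCLM.hasDerivAt (x := θ)).mul_const Complex.I).const_add (ρ : ℂ)).cexp
  simpa [EE] using h

lemma fderiv_dec (L : ℂ →L[ℝ] ℝ) (z : ℂ) : L z = z.re * L 1 + z.im * L Complex.I := by
  conv_lhs => rw [← Complex.re_add_im z]
  rw [map_add, ← mul_one ((z.re : ℝ) : ℂ), ← Complex.real_smul, ← Complex.real_smul, map_smul,
    map_smul]
  simp

lemma comp_dρ {f : ℂ → ℝ} {ρ θ : ℝ} (hf : DifferentiableAt ℝ f (EE ρ θ)) :
    HasDerivAt (fun t => f (EE t θ))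
      ((EE ρ θ).re * pdx f (EE ρ θ) + (EE ρ θ).im * pdy f (EE ρ θ)) ρ := by
  have := hf.hasFDerivAt.comp_hasDerivAt ρ (EE_dρ ρ θ)
  refine this.congr_deriv ?_
  rw [fderiv_dec, pdx_eq hf, pdy_eq hf]

lemma comp_dθ {f : ℂ → ℝ} {ρ θ : ℝ} (hf : DifferentiableAt ℝ f (EE ρ θ)) :
    HasDerivAt (fun t => f (EE ρ t))
      (-(EE ρ θ).im * pdx f (EE ρ θ) + (EE ρ θ).re * pdy f (EE ρ θ)) θ := by
  have := hf.hasFDerivAt.comp_hasDerivAt θ (EE_dθ ρ θ)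
  refine this.congr_deriv ?_
  rw [fderiv_dec, pdx_eq hf, pdy_eq hf]
  simp

lemma diffAt_of {u : ℂ → ℝ} (hu : ContDiffOn ℝ 2 u PDisc) {z : ℂ} (hz : z ∈ PDisc) :
    DifferentiableAt ℝ u z :=
  (hu.contDiffAt (isOpen_PDisc.mem_nhds hz)).differentiableAt (by norm_num)

lemma diffAt_pd {u : ℂ → ℝ} (hu : ContDiffOn ℝ 2 u PDisc) {z : ℂ} (hz : z ∈ PDisc) :
    DifferentiableAt ℝ (pdx u) z ∧ DifferentiableAt ℝ (pdy u) z := by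
  have h1 : DifferentiableAt ℝ (fderiv ℝ u) z :=
    ((hu.contDiffAt (isOpen_PDisc.mem_nhds hz)).fderiv_right (m := 1) (by norm_num)).differentiableAt
      (by norm_num)
  constructor
  · have e : pdx u =ᶠ[𝓝 z] fun w => fderiv ℝ u w 1 := by
      filter_upwards [isOpen_PDisc.mem_nhds hz] with w hw using pdx_eq (diffAt_of hu hw)
    exact (h1.clm_apply (differentiableAt_const _)).congr_of_eventuallyEq e
  · have e : pdy u =ᶠ[𝓝 z] fun w => fderiv ℝ u w Complex.I := by
      filter_upwards [isOpen_PDisc.mem_nhds hz] with w hw using pdy_eq (diffAt_of hu hw)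
    exact (h1.clm_apply (differentiableAt_const _)).congr_of_eventuallyEq e

lemma lap_cyl {u : ℂ → ℝ} (hu : ContDiffOn ℝ 2 u PDisc) {ρ : ℝ} (hρ : ρ < 0) (θ : ℝ) :
    LapAt (fun ρ θ => u (EE ρ θ)) (‖EE ρ θ‖ ^ 2 * lap u (EE ρ θ)) ρ θ := by
  have hz := EE_mem hρ θ
  obtain ⟨hx, hy⟩ := diffAt_pd hu hz
  have r1 : HasDerivAt (fun t => (EE t θ).re) (EE ρ θ).re ρ :=
    Complex.reCLM.hasFDerivAt.comp_hasDerivAt ρ (EE_dρ ρ θ)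
  have i1 : HasDerivAt (fun t => (EE t θ).im) (EE ρ θ).im ρ :=
    Complex.imCLM.hasFDerivAt.comp_hasDerivAt ρ (EE_dρ ρ θ)
  have r2 : HasDerivAt (fun t => (EE ρ t).re) (-(EE ρ θ).im) θ := by
    have := Complex.reCLM.hasFDerivAt.comp_hasDerivAt θ (EE_dθ ρ θ)
    simpa [Function.comp_def] using this
  have i2 : HasDerivAt (fun t => (EE ρ t).im) ((EE ρ θ).re) θ := by
    have := Complex.imCLM.hasFDerivAt.comp_hasDerivAt θ (EE_dθ ρ θ)
    simpa [Function.comp_def] using this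
  refine ⟨fun s => (EE s θ).re * pdx u (EE s θ) + (EE s θ).im * pdy u (EE s θ),
    fun s => -(EE ρ s).im * pdx u (EE ρ s) + (EE ρ s).re * pdy u (EE ρ s), _, _, ?_,
    (r1.mul (comp_dρ hx)).add (i1.mul (comp_dρ hy)), ?_,
    (i2.fun_neg.mul (comp_dθ hx)).add (r2.mul (comp_dθ hy)), ?_⟩
  · filter_upwards [Iio_mem_nhds hρ] with s hs
    exact comp_dρ (diffAt_of hu (EE_mem hs θ))
  · exact Eventually.of_forall fun s => comp_dθ (diffAt_of hu (EE_mem hρ s))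
  · have : ‖EE ρ θ‖ ^ 2 = (EE ρ θ).re ^ 2 + (EE ρ θ).im ^ 2 := by
      rw [Complex.sq_norm, Complex.normSq_apply]; ring
    rw [this, lap]
    ring

lemma unif {X : Type*} [PseudoMetricSpace X] {F : ℂ → X} {l : X}
    (hF : Tendsto F (𝓝[PDisc] 0) (𝓝 l)) :
    ∀ ε > 0, ∃ R < 0, ∀ ρ < R, ∀ θ, dist (F (EE ρ θ)) l ≤ ε := by
  intro ε hε
  obtain ⟨δ, hδ, h⟩ := Metric.tendsto_nhdsWithin_nhds.1 hF ε hε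
  refine ⟨min (Real.log δ) (-1), by simp, fun ρ hρ θ => (h (EE_mem ?_ θ) ?_).le⟩
  · have := hρ.trans_le (min_le_right _ _); linarith
  · rw [dist_zero_right, norm_EE, ← Real.lt_log_iff_exp_lt hδ]
    exact hρ.trans_le (min_le_left _ _)

lemma res_real {h : ℂ → ℝ} (hh : ContDiffOn ℝ 2 h PDisc) {G : ℂ → ℂ}
    (hG : Tendsto G (𝓝[PDisc] 0) (𝓝 (G 0)))
    (hord : ∀ z ∈ PDisc, (pdx h z : ℂ) - (pdy h z : ℂ) * Complex.I = z ^ (-1 : ℤ) * G z) :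
    (G 0).im = 0 := by
  by_contra hne
  obtain ⟨R, hR, hu⟩ := unif hG (|(G 0).im| / 2) (by positivity)
  have hρ : R - 1 < 0 := by linarith
  obtain ⟨θ, -, hθ⟩ := exists_hasDerivAt_eq_zero (f := fun t => h (EE (R - 1) t))
    (a := 0) (b := 2 * π) (by positivity)
    (fun t _ => (comp_dθ (diffAt_of hh (EE_mem hρ t))).continuousAt.continuousWithinAt)
    (by
      congr 1
      simp [EE, Complex.exp_add])
    (fun t _ => comp_dθ (diffAt_of hh (EE_mem hρ t)))
  set z := EE (R - 1) θ with hz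
  have hzm : z ∈ PDisc := EE_mem hρ θ
  have hz0 : z ≠ 0 := norm_pos_iff.1 hzm.1
  have e : z * ((pdx h z : ℂ) - (pdy h z : ℂ) * Complex.I) = G z := by
    rw [hord z hzm, _root_.zpow_neg_one]; field_simp
  have e2 : (G z).im = 0 := by
    rw [← e]
    simp
    linarith
  have h3 := hu (R - 1) (by linarith) θ
  rw [← hz, dist_eq_norm] at h3
  have h4 := (Complex.abs_im_le_norm (G z - G 0)).trans h3
  rw [Complex.sub_im, e2, zero_sub, abs_neg] at h4
  have : 0 < |(G 0).im| := abs_pos.2 hne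
  linarith

lemma exists_K {a : ℝ} {h : ℂ → ℝ} (hh : ContDiffOn ℝ 2 h PDisc) {N : ℤ} {G : ℂ → ℂ}
    (hGhol : DifferentiableOn ℂ G (Metric.ball (0 : ℂ) 1)) (hG0 : G 0 ≠ 0)
    (hord : ∀ z ∈ PDisc, (pdx h z : ℂ) - (pdy h z : ℂ) * Complex.I = z ^ N * G z)
    {n : ℤ} (hn : n = if a = 0 then N else min (-1) N) :
    ∃ (K : ℂ → ℂ) (K0 : ℂ), K0 ≠ 0 ∧ Tendsto K (𝓝[PDisc] 0) (𝓝 K0) ∧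
      ∀ z ∈ PDisc, z ^ N * G z + Complex.I * a / z = z ^ n * K z := by
  have hGc : ContinuousAt G 0 :=
    (hGhol.differentiableAt (Metric.ball_mem_nhds 0 one_pos)).continuousAt
  have hGt : Tendsto G (𝓝[PDisc] 0) (𝓝 (G 0)) := hGc.tendsto.mono_left nhdsWithin_le_nhds
  by_cases ha : a = 0
  · rw [if_pos ha] at hn
    subst hn ha
    exact ⟨G, G 0, hG0, hGt, fun z _ => by simp⟩
  rw [if_neg ha] at hn
  obtain ⟨p, hp⟩ : ∃ p : ℕ, N - n = p := Int.eq_ofNat_of_zero_le (by omega)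
  obtain ⟨m, hm⟩ : ∃ m : ℕ, -1 - n = m := Int.eq_ofNat_of_zero_le (by omega)
  refine ⟨fun z => z ^ p * G z + Complex.I * a * z ^ m, 0 ^ p * G 0 + Complex.I * a * 0 ^ m,
    ?_, ?_, ?_⟩
  · have haC : (a : ℂ) ≠ 0 := by exact_mod_cast ha
    rcases Nat.eq_zero_or_pos p with rfl | hp0
    · rcases Nat.eq_zero_or_pos m with rfl | hm0
      · have hN : N = -1 := by simp at hp hm; omega
        subst hN
        have him := res_real hh hGt hord
        intro h0
        have h1 := congrArg Complex.re h0
        simp at h1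
        exact hG0 (Complex.ext h1 him)
      · rw [zero_pow hm0.ne']; simpa using hG0
    · have hm0 : m = 0 := by omega
      subst hm0
      rw [zero_pow hp0.ne']; simpa using ha
  · have hid : Tendsto (fun z : ℂ => z) (𝓝[PDisc] 0) (𝓝 0) := tendsto_id.mono_left nhdsWithin_le_nhds
    exact ((hid.pow p).mul hGt).add ((hid.pow m).const_mul _)
  · intro z hz
    have hz0 : z ≠ 0 := norm_pos_iff.1 hz.1
    have e1 : z ^ N = z ^ n * z ^ p := by
      rw [← zpow_natCast, ← zpow_add₀ hz0]; congr 1; omega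
    have e2 : z⁻¹ = z ^ n * z ^ m := by
      rw [← zpow_natCast, ← zpow_add₀ hz0, ← _root_.zpow_neg_one]; congr 1; omega
    rw [div_eq_mul_inv, e1, e2]; ring

lemma normSq_f (P Q : ℝ) : P ^ 2 + Q ^ 2 = ‖(P : ℂ) - (Q : ℂ) * Complex.I‖ ^ 2 := by
  rw [Complex.sq_norm, Complex.normSq_apply]; simp; ring

lemma f_eq {a : ℝ} {z : ℂ} (hz : z ≠ 0) (P Q : ℝ) :
    (((P + a * z.im / ‖z‖ ^ 2 : ℝ) : ℂ) - ((Q - a * z.re / ‖z‖ ^ 2 : ℝ) : ℂ) * Complex.I) =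
      ((P : ℂ) - (Q : ℂ) * Complex.I) + Complex.I * a / z := by
  have h0 : ‖z‖ ^ 2 ≠ 0 := by simpa using hz
  have h1 : Complex.I * a / z = Complex.I * a * (starRingEnd ℂ z) / ((‖z‖ ^ 2 : ℝ) : ℂ) := by
    have h2 : ((‖z‖ ^ 2 : ℝ) : ℂ) = starRingEnd ℂ z * z := by
      rw [Complex.conj_mul']; push_cast; rfl
    have h3 : starRingEnd ℂ z ≠ 0 := by simpa using hz
    rw [h2]; field_simp
  rw [h1]
  have h2 : Complex.I * a * (starRingEnd ℂ z) / ((‖z‖ ^ 2 : ℝ) : ℂ) =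
      ((a * z.im / ‖z‖ ^ 2 : ℝ) : ℂ) + ((a * z.re / ‖z‖ ^ 2 : ℝ) : ℂ) * Complex.I := by
    have h3 : ((‖z‖ ^ 2 : ℝ) : ℂ) ≠ 0 := by exact_mod_cast h0
    have h4 : starRingEnd ℂ z = (z.re : ℂ) - (z.im : ℂ) * Complex.I := by
      apply Complex.ext <;> simp
    rw [Complex.ofReal_div, Complex.ofReal_div, h4]
    field_simp
    push_cast
    linear_combination (-(a : ℂ) * z.im) * Complex.I_sq
  rw [h2]
  push_cast
  ring

lemma EE_zpow (n : ℤ) (ρ θ : ℝ) : EE ρ θ * EE ρ θ ^ n =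
    ((Real.exp (((n : ℝ) + 1) * ρ) : ℝ) : ℂ) *
      Complex.exp ((((n : ℝ) + 1) * θ : ℝ) * Complex.I) := by
  have h0 : EE ρ θ ≠ 0 := Complex.exp_ne_zero _
  rw [← zpow_one_add₀ h0, EE, ← Complex.exp_int_mul, Complex.ofReal_exp, ← Complex.exp_add]
  congr 1
  push_cast
  ring

lemma logModelθ_eq {n : ℤ} {b B : ℂ} {r θ l : ℝ}
    (hB : b * Complex.exp ((((n : ℝ) + 1) * θ : ℝ) * Complex.I) = B) (hl : (Real.log r)⁻¹ = -l) :
    logModelθ n b r θ = !![-(l * B.im) / 2, (-((n : ℝ) + 1) + l - l * B.re) / 2;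
      (((n : ℝ) + 1) - l - l * B.re) / 2, l * B.im / 2] := by
  unfold logModelθ
  rw [hB, hl]
  ext i j
  fin_cases i <;> fin_cases j <;> simp <;> ring

lemma logModelr_eq {n : ℤ} {b B : ℂ} {r θ l : ℝ}
    (hB : b * Complex.exp ((((n : ℝ) + 1) * θ : ℝ) * Complex.I) = B) (hl : (Real.log r)⁻¹ = -l) :
    logModelr n b r θ = !![(((n : ℝ) + 1) - l + l * B.re) / 2, -(l * B.im) / 2;
      -(l * B.im) / 2, (((n : ℝ) + 1) - l - l * B.re) / 2] := by
  unfold logModelr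
  rw [hB, hl]
  ext i j
  fin_cases i <;> fin_cases j <;> simp <;> ring

lemma final_bound {h u : ℂ → ℝ} {a r θ l ε X Y Zr Zi : ℝ} {n : ℤ} {b B w : ℂ}
    (hB : b * Complex.exp ((((n : ℝ) + 1) * θ : ℝ) * Complex.I) = B) (hl : (Real.log r)⁻¹ = -l)
    (hr : r ≠ 0) (hnz : ‖w‖ = r)
    (a1 : r * ω11r h u a w = (l * Zr - X) / 2)
    (a2 : r * ω22r h u a w = -(l * Zr + X) / 2)
    (a3 : ω11θ h u a w = (-(l * Zi) - Y) / 2)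
    (a4 : ω22θ h u a w = -(-(l * Zi) + Y) / 2)
    (hq1 : |X + ((n : ℝ) + 1 + -l)| ≤ ε * l) (hq2 : |Y| ≤ ε * l)
    (hmr : |l * (Zr - B.re)| ≤ ε * l) (hmi : |l * (Zi - B.im)| ≤ ε * l) (i j : Fin 2) :
    |Mθ h u a w i j - logModelθ n b r θ i j| ≤ ε * l ∧
    |r * Mr h u a w i j - logModelr n b r θ i j| ≤ ε * l := by
  rw [logModelθ_eq hB hl, logModelr_eq hB hl]
  have a5 : r * (ω11θ h u a w / r) = (-(l * Zi) - Y) / 2 := by rw [← a3]; field_simp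
  have a6 : r * (-ω22θ h u a w / r) = (-(l * Zi) + Y) / 2 := by
    have : r * (-ω22θ h u a w / r) = -ω22θ h u a w := by field_simp
    rw [this, a4]; ring
  have a7 : -r * ω11r h u a w = -((l * Zr - X) / 2) := by rw [neg_mul, a1]
  rw [abs_le] at hq1 hq2 hmr hmi
  rw [mul_sub] at hmr hmi
  obtain ⟨h1, h2⟩ := hq1
  obtain ⟨h3, h4⟩ := hq2
  obtain ⟨h5, h6⟩ := hmr
  obtain ⟨h7, h8⟩ := hmi
  rw [abs_le, abs_le]
  fin_cases i <;> fin_cases j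
  · change (_ ≤ ω11θ h u a w - _ ∧ ω11θ h u a w - _ ≤ _) ∧
      (_ ≤ r * ω11r h u a w - _ ∧ r * ω11r h u a w - _ ≤ _)
    rw [a3, a1]
    simp
    refine ⟨⟨?_, ?_⟩, ?_, ?_⟩ <;> linarith
  · change (_ ≤ -‖w‖ * ω11r h u a w - _ ∧ -‖w‖ * ω11r h u a w - _ ≤ _) ∧
      (_ ≤ r * (ω11θ h u a w / ‖w‖) - _ ∧ r * (ω11θ h u a w / ‖w‖) - _ ≤ _)
    rw [hnz, a7, a5]
    simp
    refine ⟨⟨?_, ?_⟩, ?_, ?_⟩ <;> linarith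
  · change (_ ≤ ‖w‖ * ω22r h u a w - _ ∧ ‖w‖ * ω22r h u a w - _ ≤ _) ∧
      (_ ≤ r * (-ω22θ h u a w / ‖w‖) - _ ∧ r * (-ω22θ h u a w / ‖w‖) - _ ≤ _)
    rw [hnz, a2, a6]
    simp
    refine ⟨⟨?_, ?_⟩, ?_, ?_⟩ <;> linarith
  · change (_ ≤ ω22θ h u a w - _ ∧ ω22θ h u a w - _ ≤ _) ∧
      (_ ≤ r * ω22r h u a w - _ ∧ r * ω22r h u a w - _ ≤ _)
    rw [a4, a2]
    simp
    refine ⟨⟨?_, ?_⟩, ?_, ?_⟩ <;> linarith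

set_option maxHeartbeats 1000000 in
theorem stmt13 (a : ℝ) (h u : ℂ → ℝ)
    (hh : ContDiffOn ℝ 2 h PDisc) (hu : ContDiffOn ℝ 2 u PDisc)
    (hharm : ∀ z ∈ PDisc, lap h z = 0)
    (hpde : ∀ z ∈ PDisc, lap u z
      = ((pdx h z + a * z.im / ‖z‖ ^ 2) ^ 2 + (pdy h z - a * z.re / ‖z‖ ^ 2) ^ 2)
        * Real.exp (2 * u z))
    (N : ℤ) (G : ℂ → ℂ)
    (hGhol : DifferentiableOn ℂ G (Metric.ball (0 : ℂ) 1)) (hG0 : G 0 ≠ 0)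
    (hord : ∀ z ∈ PDisc, (pdx h z : ℂ) - (pdy h z : ℂ) * Complex.I = z ^ N * G z)
    (n : ℤ) (hn : n = if a = 0 then N else min (-1) N)
    (c : ℝ)
    (hlog : Tendsto
      (fun z => u z + ((n : ℝ) + 1) * Real.log ‖z‖ + Real.log |Real.log ‖z‖|)
      (𝓝[PDisc] 0) (𝓝 c)) :
    ∃ b : ℂ, ‖b‖ = 1 ∧
      ∀ ε > (0 : ℝ), ∃ δ : ℝ, 0 < δ ∧ δ < 1 ∧
        ∀ r θ : ℝ, 0 < r → r < δ → ∀ i j : Fin 2,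
          |Mθ h u a ((r : ℂ) * Complex.exp ((θ : ℝ) * Complex.I)) i j
              - logModelθ n b r θ i j| ≤ ε * |Real.log r|⁻¹ ∧
          |r * Mr h u a ((r : ℂ) * Complex.exp ((θ : ℝ) * Complex.I)) i j
              - logModelr n b r θ i j| ≤ ε * |Real.log r|⁻¹ := by
  obtain ⟨K, K0, hK0, hKt, hK⟩ := exists_K (a := a) hh hGhol hG0 hord hn
  set V : ℝ → ℝ → ℝ := fun ρ θ => u (EE ρ θ) + ((((n : ℝ) + 1) * ρ + Real.log ρ) + 0) with hVdef
  have hVeq : ∀ ρ θ, V ρ θ = u (EE ρ θ) + ((n : ℝ) + 1) * Real.log ‖EE ρ θ‖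
      + Real.log |Real.log ‖EE ρ θ‖| := by
    intro ρ θ
    rw [norm_EE, Real.log_exp, Real.log_abs]
    simp only [hVdef]; ring
  have hfz : ∀ z ∈ PDisc, (((pdx h z + a * z.im / ‖z‖ ^ 2 : ℝ) : ℂ) -
      ((pdy h z - a * z.re / ‖z‖ ^ 2 : ℝ) : ℂ) * Complex.I) = z ^ n * K z := by
    intro z hz
    rw [f_eq (norm_pos_iff.1 hz.1), hord z hz, hK z hz]
  have hexpV : ∀ ρ < 0, ∀ θ, Real.exp (u (EE ρ θ)) * Real.exp (((n : ℝ) + 1) * ρ) =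
      |ρ|⁻¹ * Real.exp (V ρ θ) := by
    intro ρ hρ θ
    have : 0 < |ρ| := abs_pos.2 hρ.ne
    simp only [hVdef]
    rw [add_zero, Real.exp_add, Real.exp_add, ← Real.log_abs ρ, Real.exp_log this]
    field_simp
  have hcont : ContinuousOn (fun P : ℝ × ℝ => V P.1 P.2) (Iio 0 ×ˢ univ) := by
    have hE : Continuous (fun P : ℝ × ℝ => EE P.1 P.2) := by
      unfold EE; fun_prop
    have h1 : ContinuousOn (fun P : ℝ × ℝ => u (EE P.1 P.2)) (Iio 0 ×ˢ univ) :=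
      hu.continuousOn.comp hE.continuousOn fun P hP => EE_mem hP.1 P.2
    have h2 : ContinuousOn (fun P : ℝ × ℝ => Real.log P.1) (Iio 0 ×ˢ univ) :=
      continuousOn_fst.log fun P hP => (hP.1 : P.1 < 0).ne
    have h3 : ContinuousOn (fun P : ℝ × ℝ => ((n : ℝ) + 1) * P.1) (Iio 0 ×ˢ univ) := by fun_prop
    exact h1.add ((h3.add h2).add continuousOn_const)
  have hlogd : ∀ ρ < 0, HasDerivAt (fun ρ => ((n : ℝ) + 1) * ρ + Real.log ρ)
      (((n : ℝ) + 1) + ρ⁻¹) ρ := by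
    intro ρ hρ
    have := ((hasDerivAt_id ρ).const_mul ((n : ℝ) + 1)).fun_add (Real.hasDerivAt_log hρ.ne)
    simpa using this
  have hLap : ∀ ρ < 0, ∀ θ, LapAt V
      ((‖K (EE ρ θ)‖ ^ 2 * Real.exp (V ρ θ) ^ 2 - 1) / ρ ^ 2) ρ θ := by
    intro ρ hρ θ
    have h1 := lap_cyl hu hρ θ
    have h2 : LapAt (fun ρ _ => (((n : ℝ) + 1) * ρ + Real.log ρ) + 0) (-(ρ ^ 2)⁻¹ + 0) ρ θ := by
      refine LapAt.sep (f := fun ρ => ((n : ℝ) + 1) * ρ + Real.log ρ) (g := fun _ => 0)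
        (f' := fun ρ => ((n : ℝ) + 1) + ρ⁻¹) (g' := fun _ => 0) ?_ ?_ ?_ ?_
      · filter_upwards [Iio_mem_nhds hρ] with s hs using hlogd s hs
      · exact (hasDerivAt_inv hρ.ne).const_add _
      · exact Eventually.of_forall fun s => hasDerivAt_const s 0
      · exact hasDerivAt_const θ 0
    have h3 := h1.add h2
    have hz := EE_mem hρ θ
    have e : ‖EE ρ θ‖ ^ 2 * lap u (EE ρ θ) + (-(ρ ^ 2)⁻¹ + 0) =
        (‖K (EE ρ θ)‖ ^ 2 * Real.exp (V ρ θ) ^ 2 - 1) / ρ ^ 2 := by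
      have hn1 : ‖EE ρ θ‖ * ‖EE ρ θ ^ n‖ = Real.exp (((n : ℝ) + 1) * ρ) := by
        rw [← norm_mul, EE_zpow, norm_mul, Complex.norm_exp_ofReal_mul_I, Complex.norm_real,
          Real.norm_eq_abs, Real.abs_exp, mul_one]
      have hV' : Real.exp (V ρ θ) = |ρ| * (Real.exp (u (EE ρ θ)) * Real.exp (((n : ℝ) + 1) * ρ)) := by
        have : 0 < |ρ| := abs_pos.2 hρ.ne
        rw [hexpV ρ hρ θ]; field_simp
      rw [hpde _ hz, normSq_f, hfz _ hz, norm_mul, hV', ← hn1, two_mul, Real.exp_add, mul_pow |ρ|,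
        sq_abs]
      have := hρ.ne
      field_simp
      ring
    rw [← e]
    exact h3
  have hVu : ∀ ε > 0, ∃ R < 0, ∀ ρ < R, ∀ θ, |V ρ θ - c| ≤ ε := by
    intro ε hε
    obtain ⟨R, hR, hh⟩ := unif hlog ε hε
    refine ⟨R, hR, fun ρ hρ θ => ?_⟩
    rw [hVeq]
    exact hh ρ hρ θ
  have hfu : ∀ ε > 0, ∃ R < 0, ∀ ρ < R, ∀ θ,
      |(‖K (EE ρ θ)‖ ^ 2 * Real.exp (V ρ θ) ^ 2 - 1) - (‖K0‖ ^ 2 * Real.exp c ^ 2 - 1)| ≤ ε := by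
    intro ε hε
    obtain ⟨R, hR, hh⟩ := unif (((hKt.norm.pow 2).mul
      (((Real.continuous_exp.tendsto c).comp hlog).pow 2)).sub_const 1) ε hε
    refine ⟨R, hR, fun ρ hρ θ => ?_⟩
    rw [hVeq]
    exact hh ρ hρ θ
  obtain ⟨hκ, hgrad⟩ := asymp hcont hLap hVu hfu
  have hb1 : ‖K0‖ * Real.exp c = 1 := by
    have h1 : (‖K0‖ * Real.exp c) ^ 2 = 1 := by rw [mul_pow]; linarith
    have h2 : 0 ≤ ‖K0‖ * Real.exp c := by positivity
    nlinarith
  refine ⟨(Real.exp c : ℂ) * K0, ?_, fun ε hε => ?_⟩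
  · rw [norm_mul, Complex.norm_real, Real.norm_eq_abs, Real.abs_exp, mul_comm, hb1]
  obtain ⟨R1, hR1, hg⟩ := hgrad ε hε
  have hAt : Tendsto (fun z => ((Real.exp (u z + ((n : ℝ) + 1) * Real.log ‖z‖
      + Real.log |Real.log ‖z‖|) : ℝ) : ℂ) * K z) (𝓝[PDisc] 0) (𝓝 (((Real.exp c : ℝ) : ℂ) * K0)) :=
    ((Complex.continuous_ofReal.tendsto _).comp
      ((Real.continuous_exp.tendsto c).comp hlog)).mul hKt
  obtain ⟨R2, hR2, hA⟩ := unif hAt ε hε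
  refine ⟨Real.exp (R1 + R2), Real.exp_pos _, by simpa using (by linarith : R1 + R2 < 0), ?_⟩
  intro r θ hr hrδ
  set ρ := Real.log r with hρdef
  have hρR : ρ < R1 + R2 := (Real.log_lt_iff_lt_exp hr).2 hrδ
  have hρ : ρ < 0 := by linarith
  have hzE : (r : ℂ) * Complex.exp ((θ : ℝ) * Complex.I) = EE ρ θ := by
    rw [EE, Complex.exp_add, ← Complex.ofReal_exp, hρdef, Real.exp_log hr]
  rw [hzE]
  have hz := EE_mem hρ θ
  have hnz : ‖EE ρ θ‖ = r := by rw [norm_EE, hρdef, Real.exp_log hr]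
  have hdu := diffAt_of hu hz
  have hV1 : HasDerivAt (fun t => V t θ) (((EE ρ θ).re * pdx u (EE ρ θ) +
      (EE ρ θ).im * pdy u (EE ρ θ)) + (((n : ℝ) + 1) + ρ⁻¹)) ρ :=
    (comp_dρ hdu).add ((hlogd ρ hρ).add_const 0)
  have hV2 : HasDerivAt (fun t => V ρ t) (-(EE ρ θ).im * pdx u (EE ρ θ) +
      (EE ρ θ).re * pdy u (EE ρ θ)) θ := (comp_dθ hdu).add_const _
  have hq1 := hg ρ (by linarith) θ _ (Or.inl hV1)
  have hq2 := hg ρ (by linarith) θ _ (Or.inr hV2)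
  have hA' := hA ρ (by linarith) θ
  rw [← hVeq, dist_eq_norm] at hA'
  set e : ℂ := Complex.exp ((((n : ℝ) + 1) * θ : ℝ) * Complex.I) with he
  have hZB : ‖((Real.exp (V ρ θ) : ℝ) : ℂ) * K (EE ρ θ) * e - ((Real.exp c : ℝ) : ℂ) * K0 * e‖ ≤ ε := by
    rw [← sub_mul, norm_mul, he, Complex.norm_exp_ofReal_mul_I, mul_one]
    exact hA'
  set Z := ((Real.exp (V ρ θ) : ℝ) : ℂ) * K (EE ρ θ) * e with hZ
  set B := ((Real.exp c : ℝ) : ℂ) * K0 * e with hB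
  have hre := (Complex.abs_re_le_norm (Z - B)).trans hZB
  have him := (Complex.abs_im_le_norm (Z - B)).trans hZB
  rw [Complex.sub_re] at hre
  rw [Complex.sub_im] at him
  -- the form `e^u (dh - a dθ)`
  have hzf : ((Real.exp (u (EE ρ θ)) : ℝ) : ℂ) *
      (EE ρ θ * ((pdx h (EE ρ θ) : ℂ) - (pdy h (EE ρ θ) : ℂ) * Complex.I) + Complex.I * a) =
      ((|ρ|⁻¹ : ℝ) : ℂ) * Z := by
    have hz0 : EE ρ θ ≠ 0 := norm_pos_iff.1 hz.1
    have h1 : EE ρ θ * ((pdx h (EE ρ θ) : ℂ) - (pdy h (EE ρ θ) : ℂ) * Complex.I) + Complex.I * a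
        = EE ρ θ * EE ρ θ ^ n * K (EE ρ θ) := by
      rw [mul_assoc, ← hK _ hz, hord _ hz]; field_simp
    rw [h1, EE_zpow, ← he, hZ]
    have h2 : ((Real.exp (u (EE ρ θ)) : ℝ) : ℂ) * ((Real.exp (((n : ℝ) + 1) * ρ) : ℝ) : ℂ)
        = ((|ρ|⁻¹ : ℝ) : ℂ) * ((Real.exp (V ρ θ) : ℝ) : ℂ) := by
      rw [← Complex.ofReal_mul, hexpV ρ hρ θ, Complex.ofReal_mul]
    linear_combination (e * K (EE ρ θ)) * h2
  have hS := congrArg Complex.re hzf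
  have hT := congrArg Complex.im hzf
  rw [Complex.re_ofReal_mul, Complex.re_ofReal_mul] at hS
  rw [Complex.im_ofReal_mul, Complex.im_ofReal_mul] at hT
  simp only [Complex.add_re, Complex.add_im, Complex.mul_re, Complex.mul_im, Complex.sub_re,
    Complex.sub_im, Complex.ofReal_re, Complex.ofReal_im, Complex.I_re, Complex.I_im] at hS hT
  have hL : ρ⁻¹ = -|ρ|⁻¹ := by rw [abs_of_neg hρ, inv_neg, neg_neg]
  have hL0 : 0 < |ρ|⁻¹ := inv_pos.2 (abs_pos.2 hρ.ne)
  rw [div_eq_mul_inv] at hq1 hq2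
  rw [hL] at hq1
  have hr0 : r ≠ 0 := hr.ne'
  have hmr : |(|ρ|⁻¹ * (Z.re - B.re))| ≤ ε * |ρ|⁻¹ := by
    rw [abs_mul, abs_of_pos hL0, mul_comm]; gcongr
  have hmi : |(|ρ|⁻¹ * (Z.im - B.im))| ≤ ε * |ρ|⁻¹ := by
    rw [abs_mul, abs_of_pos hL0, mul_comm]; gcongr
  clear_value Z B V
  set w := EE ρ θ with hw
  have a1 : r * ω11r h u a w = (|ρ|⁻¹ * Z.re - (w.re * pdx u w + w.im * pdy u w)) / 2 := by
    rw [← hS, ω11r, pdr, pdr, hnz]; field_simp; ring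
  have a2 : r * ω22r h u a w = -(|ρ|⁻¹ * Z.re + (w.re * pdx u w + w.im * pdy u w)) / 2 := by
    rw [← hS, ω22r, pdr, pdr, hnz]; field_simp; ring
  have a3 : ω11θ h u a w = (-(|ρ|⁻¹ * Z.im) - (-w.im * pdx u w + w.re * pdy u w)) / 2 := by
    rw [← hT, ω11θ, pdθ, pdθ]; ring
  have a4 : ω22θ h u a w = -(-(|ρ|⁻¹ * Z.im) + (-w.im * pdx u w + w.re * pdy u w)) / 2 := by
    rw [← hT, ω22θ, pdθ, pdθ]; ring
  exact final_bound hB.symm hL hr0 hnz a1 a2 a3 a4 hq1 hq2 hmr hmi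
end
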